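/- Let λ > 0 be a positive real number. Then there exist constants C, c > 0, a potential V : ℝ² → ℂ, and a nonzero twice continuously differentiable function u : ℝ² → ℂ such that Δu + λu = V·u on ℝ², |V(x)| ≤ C·⟨x⟩^{-1/2} for all x ∈ ℝ², and |u(x)| ≤ C·exp(−c|x|) for all x ∈ ℝ². -/

import Mathlib

noncomputable section

/-- Partial derivative of `u` in the `i`-th coordinate direction. -/
def pd (u : EuclideanSpace ℝ (Fin 2) → ℂ) (i : Fin 2) (x : EuclideanSpace ℝ (Fin 2)) : ℂ :=
  fderiv ℝ u x (EuclideanSpace.single i 1)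

/-- Laplacian on ℝ²: sum of second partial derivatives. -/
def lap (u : EuclideanSpace ℝ (Fin 2) → ℂ) (x : EuclideanSpace ℝ (Fin 2)) : ℂ :=
  ∑ i, pd (fun y => pd u i y) i x

section Helpers
open Real

def D2 (f f1 f2 : ℝ → ℝ) : Prop :=
  ContDiff ℝ 2 f ∧ (∀ x, HasDerivAt f (f1 x) x) ∧ ∀ x, HasDerivAt f1 (f2 x) x

theorem D2.of_contDiff {f : ℝ → ℝ} (h : ContDiff ℝ 2 f) : D2 f (deriv f) (deriv (deriv f)) := by
  refine ⟨h, fun x => (h.differentiable (by norm_num) x).hasDerivAt, fun x => ?_⟩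
  have h1 : ContDiff ℝ 1 (deriv f) := by
    have : ContDiff ℝ (1 + 1) f := by
      convert h using 1; norm_num
    exact (contDiff_succ_iff_deriv.1 this).2.2
  exact (h1.differentiable (by norm_num) x).hasDerivAt

theorem D2.cont1 {f f1 f2 : ℝ → ℝ} (h : D2 f f1 f2) : Continuous f1 :=
  continuous_iff_continuousAt.2 fun x => (h.2.2 x).continuousAt

theorem D2.cont2 {f f1 f2 : ℝ → ℝ} (h : D2 f f1 f2) : Continuous f2 := by
  have e1 : deriv f = f1 := funext fun x => (h.2.1 x).deriv
  have e2 : deriv f1 = f2 := funext fun x => (h.2.2 x).deriv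
  have : ContDiff ℝ (1 + 1) f := by
    convert h.1 using 1; norm_num
  have h1 := (contDiff_succ_iff_deriv.1 this).2.2
  rw [e1] at h1
  have h2 : ContDiff ℝ (0 + 1) f1 := by simpa using h1
  have h3 := (contDiff_succ_iff_deriv.1 h2).2.2
  rw [e2] at h3
  exact h3.continuous

theorem D2.eventuallyConst {f f1 f2 : ℝ → ℝ} (h : D2 f f1 f2) {U : Set ℝ} (hU : IsOpen U) {k : ℝ}
    (hk : ∀ x ∈ U, f x = k) {x : ℝ} (hx : x ∈ U) : f1 x = 0 ∧ f2 x = 0 := by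
  have key : ∀ y ∈ U, f1 y = 0 := by
    intro y hy
    have : f =ᶠ[nhds y] fun _ => k := by
      filter_upwards [hU.mem_nhds hy] with z hz using hk z hz
    exact (h.2.1 y).unique ((hasDerivAt_const y k).congr_of_eventuallyEq this)
  refine ⟨key x hx, ?_⟩
  have : f1 =ᶠ[nhds x] fun _ => 0 := by
    filter_upwards [hU.mem_nhds hx] with z hz using key z hz
  exact (h.2.2 x).unique ((hasDerivAt_const x 0).congr_of_eventuallyEq this)

theorem bdd_of_zero_outside {g : ℝ → ℝ} (hg : Continuous g) {a b : ℝ}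
    (h0 : ∀ x, x ≤ a → g x = 0) (h1 : ∀ x, b ≤ x → g x = 0) : ∃ K, ∀ x, |g x| ≤ K := by
  obtain ⟨K, hK⟩ := (isCompact_Icc (a := a) (b := b)).exists_bound_of_continuousOn hg.continuousOn
  refine ⟨max K 0, fun x => ?_⟩
  by_cases ha : x ≤ a
  · simp [h0 x ha]
  by_cases hb : b ≤ x
  · simp [h1 x hb]
  exact (hK x ⟨by linarith, by linarith⟩).trans (le_max_left _ _)

theorem exists_cut (a b : ℝ) (hab : a < b) : ∃ f f1 f2 : ℝ → ℝ, D2 f f1 f2 ∧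
    (∀ x, 0 ≤ f x ∧ f x ≤ 1) ∧ (∀ x, x ≤ a → f x = 0 ∧ f1 x = 0 ∧ f2 x = 0) ∧
    (∀ x, b ≤ x → f x = 1 ∧ f1 x = 0 ∧ f2 x = 0) ∧ ∃ K, ∀ x, |f1 x| ≤ K ∧ |f2 x| ≤ K := by
  set d := (b - a) / 3 with hd
  have hdp : 0 < d := by rw [hd]; linarith
  let f : ℝ → ℝ := fun x => Real.smoothTransition ((x - (a + d)) / d)
  have hf : ContDiff ℝ 2 f := by
    have : ContDiff ℝ 2 Real.smoothTransition := Real.smoothTransition.contDiff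
    exact this.comp (by fun_prop)
  have hD := D2.of_contDiff hf
  have z0 : ∀ x ∈ Set.Iio (a + d), f x = 0 := fun x hx =>
    Real.smoothTransition.zero_of_nonpos (div_nonpos_of_nonpos_of_nonneg (by simp at hx; linarith) hdp.le)
  have z1 : ∀ x ∈ Set.Ioi (a + 2 * d), f x = 1 := fun x hx =>
    Real.smoothTransition.one_of_one_le (by rw [le_div_iff₀ hdp]; simp at hx; linarith)
  have A : ∀ x, x ≤ a → f x = 0 ∧ deriv f x = 0 ∧ deriv (deriv f) x = 0 := fun x hx => by
    have hm : x ∈ Set.Iio (a + d) := by simp; linarith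
    exact ⟨z0 x hm, hD.eventuallyConst isOpen_Iio z0 hm⟩
  have B : ∀ x, b ≤ x → f x = 1 ∧ deriv f x = 0 ∧ deriv (deriv f) x = 0 := fun x hx => by
    have hm : x ∈ Set.Ioi (a + 2 * d) := by simp; linarith
    exact ⟨z1 x hm, hD.eventuallyConst isOpen_Ioi z1 hm⟩
  obtain ⟨K1, hK1⟩ := bdd_of_zero_outside hD.cont1 (fun x hx => (A x hx).2.1) (fun x hx => (B x hx).2.1)
  obtain ⟨K2, hK2⟩ := bdd_of_zero_outside hD.cont2 (fun x hx => (A x hx).2.2) (fun x hx => (B x hx).2.2)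
  exact ⟨f, _, _, hD, fun x => ⟨Real.smoothTransition.nonneg _, Real.smoothTransition.le_one _⟩, A, B,
    max K1 K2, fun x => ⟨(hK1 x).trans (le_max_left _ _), (hK2 x).trans (le_max_right _ _)⟩⟩

theorem bdd_of_periodic {g : ℝ → ℝ} (hg : Continuous g) (hp : Function.Periodic g (2 * π)) :
    ∃ K, ∀ x, |g x| ≤ K := by
  obtain ⟨K, hK⟩ := (isCompact_Icc (a := 0) (b := 2 * π)).exists_bound_of_continuousOn hg.continuousOn
  refine ⟨K, fun x => ?_⟩
  obtain ⟨y, hy, e⟩ := hp.exists_mem_Ico₀ (by positivity) x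
  rw [e]
  exact hK y ⟨hy.1, hy.2.le⟩

theorem exists_P : ∃ P P1 P2 : ℝ → ℝ, D2 P P1 P2 ∧ Function.Periodic P (2 * π) ∧
    ∃ K c : ℝ, 0 ≤ c ∧ c < 1 ∧ (∀ x, |P x| ≤ K ∧ |P1 x| ≤ K ∧ |P2 x| ≤ K) ∧
      ∀ x, (P1 x = 1 ∧ P2 x = 0) ∨ cos x ≤ c := by
  -- cut-off of cos
  obtain ⟨f, f1, f2, hf, hf01, hf0, hf1, -⟩ := exists_cut (1/4) (1/2) (by norm_num)
  let P : ℝ → ℝ := fun x => f (cos x) * arcsin (sin x)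
  have hP : ContDiff ℝ 2 P := by
    rw [contDiff_iff_contDiffAt]
    intro x
    by_cases hx : cos x < 1 / 4
    · have : P =ᶠ[nhds x] fun _ => 0 := by
        have ho : IsOpen {y | cos y < 1/4} := isOpen_lt continuous_cos continuous_const
        filter_upwards [ho.mem_nhds hx] with y hy
        have : cos y < 1/4 := hy
        simp [P, (hf0 _ this.le).1]
      exact contDiffAt_const.congr_of_eventuallyEq this
    · have hs : sin x ≠ 1 ∧ sin x ≠ -1 := by
        have := sin_sq_add_cos_sq x
        constructor <;> (intro h; rw [h] at this; nlinarith)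
      refine ContDiffAt.mul ?_ ?_
      · exact (hf.1.comp Real.contDiff_cos).contDiffAt
      · exact (Real.contDiffAt_arcsin hs.2 hs.1).comp x Real.contDiff_sin.contDiffAt
  have hD := D2.of_contDiff hP
  have per : Function.Periodic P (2 * π) := fun x => by simp [P]
  have per1 : Function.Periodic (deriv P) (2 * π) := fun x => by
    rw [← deriv_comp_add_const]; congr 1; funext y; exact per y
  have per2 : Function.Periodic (deriv (deriv P)) (2 * π) := fun x => by
    rw [← deriv_comp_add_const]; congr 1; funext y; exact per1 y
  obtain ⟨K0, hK0⟩ := bdd_of_periodic hP.continuous per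
  obtain ⟨K1, hK1⟩ := bdd_of_periodic hD.cont1 per1
  obtain ⟨K2, hK2⟩ := bdd_of_periodic hD.cont2 per2
  refine ⟨P, _, _, hD, per, max K0 (max K1 K2), 1/2, by norm_num, by norm_num, fun x =>
    ⟨(hK0 x).trans (le_max_left _ _), (hK1 x).trans ((le_max_left _ _).trans (le_max_right _ _)),
     (hK2 x).trans ((le_max_right _ _).trans (le_max_right _ _))⟩, fun x => ?_⟩
  by_cases hx : cos x ≤ 1/2
  · exact Or.inr hx
  left
  push Not at hx
  have main : ∀ y ∈ Set.Ioo (-(π/2)) (π/2), cos y > 1/2 → deriv P y = 1 ∧ deriv (deriv P) y = 0 := by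
    intro y hy hc
    have hU : IsOpen (Set.Ioo (-(π/2)) (π/2) ∩ {z | 1/2 < cos z}) :=
      isOpen_Ioo.inter (isOpen_lt continuous_const continuous_cos)
    have hPz : ∀ z ∈ Set.Ioo (-(π/2)) (π/2) ∩ {z | 1/2 < cos z}, P z - z = 0 := by
      rintro z ⟨hz, hz2⟩
      have hz2 : 1/2 < cos z := hz2
      simp [P, (hf1 _ hz2.le).1, arcsin_sin hz.1.le hz.2.le]
    have hD' : D2 (fun z => P z - z) (fun z => deriv P z - 1) (fun z => deriv (deriv P) z) :=
      ⟨hP.sub contDiff_id, fun z => (hD.2.1 z).sub (hasDerivAt_id z), fun z => (hD.2.2 z).sub_const 1⟩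
    have := hD'.eventuallyConst hU hPz ⟨hy, hc⟩
    exact ⟨by linarith [this.1], this.2⟩
  have per3 : Function.Periodic (fun x => (cos x, deriv P x, deriv (deriv P) x)) (2 * π) := fun x => by
    simp only [per1 x, per2 x, Real.cos_periodic x]
  obtain ⟨y, hy, e⟩ := per3.exists_mem_Ico (by positivity : (0:ℝ) < 2 * π) x (-π)
  simp only [Prod.mk.injEq] at e
  rw [e.2.1, e.2.2]
  rw [e.1] at hx
  refine main y ⟨?_, ?_⟩ hx
  · by_contra h
    push Not at h
    have : cos (-y) ≤ 0 := cos_nonpos_of_pi_div_two_le_of_le (by linarith) (by linarith [hy.1, pi_pos])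
    rw [cos_neg] at this
    linarith
  · by_contra h
    push Not at h
    have : cos y ≤ 0 := cos_nonpos_of_pi_div_two_le_of_le h (by linarith [hy.2, pi_pos])
    linarith

/-- `G` is `C²` at `ζ` and its Laplacian there is `L`. -/
def HasLap (G : ℂ → ℂ) (L ζ : ℂ) : Prop :=
  ContDiffAt ℝ 2 G ζ ∧
    fderiv ℝ (fderiv ℝ G) ζ 1 1 + fderiv ℝ (fderiv ℝ G) ζ Complex.I Complex.I = L

theorem HasLap.congr {G H : ℂ → ℂ} {L ζ : ℂ} (h : HasLap G L ζ) (e : H =ᶠ[nhds ζ] G) :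
    HasLap H L ζ := by
  refine ⟨h.1.congr_of_eventuallyEq e, ?_⟩
  have := e.fderiv (𝕜 := ℝ)
  rw [this.fderiv_eq]
  exact h.2

theorem HasLap.add {G H : ℂ → ℂ} {L M ζ : ℂ} (h : HasLap G L ζ) (h' : HasLap H M ζ) :
    HasLap (fun z => G z + H z) (L + M) ζ := by
  refine ⟨h.1.add h'.1, ?_⟩
  have e : fderiv ℝ (fun z => G z + H z) =ᶠ[nhds ζ] fun z => fderiv ℝ G z + fderiv ℝ H z := by
    filter_upwards [h.1.eventually (by simp), h'.1.eventually (by simp)] with z hz hz'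
    exact fderiv_fun_add (hz.differentiableAt (by norm_num)) (hz'.differentiableAt (by norm_num))
  have d1 : DifferentiableAt ℝ (fderiv ℝ G) ζ :=
    (h.1.fderiv_right (m := 1) (by norm_num)).differentiableAt (by norm_num)
  have d2 : DifferentiableAt ℝ (fderiv ℝ H) ζ :=
    (h'.1.fderiv_right (m := 1) (by norm_num)).differentiableAt (by norm_num)
  rw [e.fderiv_eq, fderiv_fun_add d1 d2, ← h.2, ← h'.2]
  simp only [_root_.add_apply]
  ring

theorem second_slice {G Gv : ℂ → ℂ} {Gvv ζ v : ℂ} (hG : ContDiff ℝ 2 G)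
    (h1 : ∀ z, HasDerivAt (fun t : ℝ => G (z + t * v)) (Gv z) 0)
    (h2 : HasDerivAt (fun t : ℝ => Gv (ζ + t * v)) Gvv 0) :
    fderiv ℝ (fderiv ℝ G) ζ v v = Gvv := by
  have e1 : ∀ z, fderiv ℝ G z v = Gv z := by
    intro z
    have := ((hG.differentiable (by norm_num) z).hasFDerivAt).hasLineDerivAt v
    refine HasDerivAt.unique this ?_
    simpa using h1 z
  have d1 : DifferentiableAt ℝ (fderiv ℝ G) ζ :=
    (hG.fderiv_right (m := 1) (by norm_num)).differentiable (by norm_num) ζ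
  have d3 : HasFDerivAt (fun z => fderiv ℝ G z v) ((fderiv ℝ (fderiv ℝ G) ζ).flip v) ζ := by
    simpa using d1.hasFDerivAt.clm_apply (hasFDerivAt_const v ζ)
  have d4 := d3.hasLineDerivAt v
  simp only [e1] at d4
  refine HasDerivAt.unique d4 ?_
  simpa using h2

/-- scaled identification of the plane with `ℂ` -/
def ZL (μ : ℝ) : EuclideanSpace ℝ (Fin 2) →L[ℝ] ℂ :=
  (EuclideanSpace.proj (0 : Fin 2) : EuclideanSpace ℝ (Fin 2) →L[ℝ] ℝ).smulRight (μ : ℂ) +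
  (EuclideanSpace.proj (1 : Fin 2) : EuclideanSpace ℝ (Fin 2) →L[ℝ] ℝ).smulRight ((μ : ℂ) * Complex.I)

theorem ZL_apply (μ : ℝ) (x : EuclideanSpace ℝ (Fin 2)) :
    ZL μ x = μ * (x 0 + x 1 * Complex.I) := by
  simp [ZL]; ring

theorem ZL_norm {μ : ℝ} (hμ : 0 < μ) (x : EuclideanSpace ℝ (Fin 2)) : ‖ZL μ x‖ = μ * ‖x‖ := by
  rw [ZL_apply, norm_mul, Complex.norm_real, Real.norm_of_nonneg hμ.le, EuclideanSpace.norm_eq,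
    Complex.norm_add_mul_I]
  simp

theorem ZL_e0 (μ : ℝ) : ZL μ (EuclideanSpace.single 0 1) = μ := by
  rw [ZL_apply]; simp

theorem ZL_e1 (μ : ℝ) : ZL μ (EuclideanSpace.single 1 1) = μ * Complex.I := by
  rw [ZL_apply]; simp

theorem lap_congr {u v : EuclideanSpace ℝ (Fin 2) → ℂ} {x : EuclideanSpace ℝ (Fin 2)}
    (e : u =ᶠ[nhds x] v) : lap u x = lap v x := by
  unfold lap pd
  refine Finset.sum_congr rfl fun i _ => ?_
  have : (fun y => fderiv ℝ u y (EuclideanSpace.single i 1)) =ᶠ[nhds x]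
      (fun y => fderiv ℝ v y (EuclideanSpace.single i 1)) := by
    filter_upwards [e.fderiv (𝕜 := ℝ)] with y hy
    rw [hy]
  rw [this.fderiv_eq]

theorem bilin_conf (B : ℂ →L[ℝ] ℂ →L[ℝ] ℂ) (a : ℂ) :
    B a a + B (Complex.I * a) (Complex.I * a) = (‖a‖ ^ 2 : ℝ) * (B 1 1 + B Complex.I Complex.I) := by
  have h1 : a = a.re • (1 : ℂ) + a.im • Complex.I := by
    simp
  have h2 : Complex.I * a = (-a.im) • (1 : ℂ) + a.re • Complex.I := by
    apply Complex.ext <;> simp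
  rw [h2]
  have h3 : B a a = B (a.re • (1 : ℂ) + a.im • Complex.I) (a.re • (1 : ℂ) + a.im • Complex.I) := by
    rw [← h1]
  rw [h3, ← Complex.normSq_eq_norm_sq, Complex.normSq_apply]
  simp only [map_add, map_smul, _root_.add_apply, _root_.smul_apply]
  simp only [Complex.real_smul]
  push_cast
  ring

/-- local logarithm chain rule -/
theorem lap_log {G : ℂ → ℂ} {L w : ℂ} {μ : ℝ} (hμ : 0 < μ) {x : EuclideanSpace ℝ (Fin 2)}
    (hx : x ≠ 0) (hL : HasLap G L (Complex.log (ZL μ x)))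
    {u : EuclideanSpace ℝ (Fin 2) → ℂ} (hw : w = Complex.log (ZL μ x))
    (hu : u =ᶠ[nhds x] fun y => G (Complex.log (ZL μ y / ZL μ x) + w)) :
    ContDiffAt ℝ 2 u x ∧ lap u x = L / (‖x‖ ^ 2 : ℝ) := by
  have hn : 0 < ‖x‖ := norm_pos_iff.2 hx
  have hz : ZL μ x ≠ 0 := by
    rw [← norm_pos_iff, ZL_norm hμ]; positivity
  set Λ : EuclideanSpace ℝ (Fin 2) → ℂ := fun y => Complex.log (ZL μ y / ZL μ x) + w with hΛ
  have hΛx : Λ x = Complex.log (ZL μ x) := by simp [hΛ, hz, hw]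
  have hΛc : ContDiffAt ℝ 2 Λ x := by
    refine ContDiffAt.add ?_ contDiffAt_const
    have h0 : ContDiffAt ℝ 2 (fun y => ZL μ y / ZL μ x) x := by
      simp only [div_eq_mul_inv]
      exact ((ZL μ).contDiff.mul contDiff_const).contDiffAt
    have h1 : ContDiffAt ℝ 2 Complex.log (ZL μ x / ZL μ x) := by
      rw [div_self hz]
      exact (Complex.contDiffAt_log (n := 2) (by simp)).restrict_scalars ℝ
    exact ContDiffAt.comp x h1 h0
  have hGc : ContDiffAt ℝ 2 (fun y => G (Λ y)) x := by
    have : ContDiffAt ℝ 2 G (Λ x) := by rw [hΛx]; exact hL.1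
    exact ContDiffAt.comp x this hΛc
  refine ⟨hGc.congr_of_eventuallyEq hu, ?_⟩
  rw [lap_congr hu]
  -- derivative of Λ near x
  have hΛd : ∀ᶠ y in nhds x, HasFDerivAt Λ (((ZL μ y)⁻¹ : ℂ) • ZL μ) y := by
    have c1 : ContinuousAt (fun y => ZL μ y / ZL μ x) x := by
      simp only [div_eq_mul_inv]
      exact ((ZL μ).continuous.mul continuous_const).continuousAt
    have c2 : ∀ᶠ y in nhds x, ZL μ y / ZL μ x ∈ Complex.slitPlane := by
      refine c1.eventually_mem (Complex.isOpen_slitPlane.mem_nhds ?_)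
      rw [div_self hz]; simp
    filter_upwards [c2] with y hy
    have hy0 : ZL μ y ≠ 0 := by
      intro h; rw [h] at hy; simp at hy
    have h0 : HasFDerivAt (fun y => ZL μ y / ZL μ x) (((ZL μ x)⁻¹ : ℂ) • ZL μ) y := by
      simp only [div_eq_inv_mul]
      exact (ZL μ).hasFDerivAt.const_smul ((ZL μ x)⁻¹ : ℂ)
    have h1 := ((Complex.hasStrictDerivAt_log hy).hasDerivAt.comp_hasFDerivAt_of_eq y h0 rfl).add_const w
    have e : ((ZL μ y / ZL μ x)⁻¹ : ℂ) • ((ZL μ x)⁻¹ : ℂ) • ZL μ = ((ZL μ y)⁻¹ : ℂ) • ZL μ := by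
      rw [smul_smul]
      congr 1
      field_simp
    rw [e] at h1
    exact h1
  have hGd : ∀ᶠ y in nhds x, DifferentiableAt ℝ G (Λ y) := by
    have h1 : ∀ᶠ z in nhds (Λ x), DifferentiableAt ℝ G z := by
      rw [hΛx]
      filter_upwards [hL.1.eventually (by simp)] with z hz using hz.differentiableAt (by norm_num)
    exact hΛc.continuousAt.eventually h1
  have hpd : ∀ v, (fun y => fderiv ℝ (fun y => G (Λ y)) y v) =ᶠ[nhds x]
      fun y => fderiv ℝ G (Λ y) ((ZL μ y)⁻¹ * ZL μ v) := by
    intro v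
    filter_upwards [hΛd, hGd] with y h1 h2
    have : HasFDerivAt (fun y => G (Λ y)) _ y := h2.hasFDerivAt.comp y h1
    rw [this.fderiv]
    simp
  have hsec : ∀ v, fderiv ℝ (fun y => fderiv ℝ (fun y => G (Λ y)) y v) x v =
      fderiv ℝ (fderiv ℝ G) (Λ x) ((ZL μ x)⁻¹ * ZL μ v) ((ZL μ x)⁻¹ * ZL μ v) +
      fderiv ℝ G (Λ x) (-(((ZL μ x)⁻¹ * ZL μ v) ^ 2)) := by
    intro v
    rw [(hpd v).fderiv_eq]
    have d1 : DifferentiableAt ℝ (fderiv ℝ G) (Λ x) := by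
      rw [hΛx]
      exact (hL.1.fderiv_right (m := 1) (by norm_num)).differentiableAt (by norm_num)
    have d2 : HasFDerivAt (fun y => fderiv ℝ G (Λ y)) _ x :=
      d1.hasFDerivAt.comp x hΛd.self_of_nhds
    have d3 : HasFDerivAt (fun y => (ZL μ y)⁻¹ * ZL μ v)
        ((ZL μ v) • (-(((ZL μ x) ^ 2)⁻¹ : ℂ) • ZL μ)) x := by
      have := ((hasDerivAt_inv hz).comp_hasFDerivAt_of_eq x (ZL μ).hasFDerivAt rfl).mul_const (ZL μ v)
      simpa using this
    have d4 := d2.clm_apply d3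
    rw [d4.fderiv]
    have e : ZL μ v * ((ZL μ x ^ 2)⁻¹ * ZL μ v) = ((ZL μ x)⁻¹ * ZL μ v) ^ 2 := by
      rw [mul_pow, inv_pow]; ring
    simp
    rw [e, add_comm]
  unfold lap pd
  rw [Fin.sum_univ_two, hsec, hsec, ZL_e0, ZL_e1]
  have ha : ((ZL μ x)⁻¹ * (μ * Complex.I)) = Complex.I * ((ZL μ x)⁻¹ * μ) := by ring
  rw [ha]
  set a := (ZL μ x)⁻¹ * (μ : ℂ) with hadef
  have hB := bilin_conf (fderiv ℝ (fderiv ℝ G) (Λ x)) a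
  have hlin : fderiv ℝ G (Λ x) (-(a ^ 2)) + fderiv ℝ G (Λ x) (-((Complex.I * a) ^ 2)) = 0 := by
    rw [← map_add, mul_pow Complex.I, Complex.I_sq]; simp
  have hna : ‖a‖ ^ 2 = (‖x‖ ^ 2)⁻¹ := by
    rw [hadef, norm_mul, norm_inv, ZL_norm hμ, Complex.norm_real, Real.norm_of_nonneg hμ.le]
    field_simp
  rw [hna, hΛx, hL.2] at hB
  rw [hΛx] at hlin ⊢
  linear_combination hB + hlin + (by push_cast; ring : (((‖x‖ ^ 2)⁻¹ : ℝ) : ℂ) * L - L / ((‖x‖ ^ 2 : ℝ):ℂ) = 0)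


theorem lap_zero_pow {μ : ℝ} {n : ℕ} (hn : 3 ≤ n) (K : ℂ) :
    lap (fun y => K * (starRingEnd ℂ) (ZL μ y) ^ n) 0 = 0 := by
  let W : EuclideanSpace ℝ (Fin 2) →L[ℝ] ℂ := (Complex.conjCLE : ℂ →L[ℝ] ℂ).comp (ZL μ)
  have hW : ∀ y, (starRingEnd ℂ) (ZL μ y) = W y := fun y => by simp [W]
  have hp : ∀ (k : ℕ) (K : ℂ) (y v : EuclideanSpace ℝ (Fin 2)),
      fderiv ℝ (fun y => K * W y ^ k) y v = (K * k * W v) * W y ^ (k - 1) := by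
    intro k K y v
    have h1 : HasFDerivAt (fun y => K * W y ^ k) _ y :=
      ((hasDerivAt_pow k (W y)).comp_hasFDerivAt_of_eq y W.hasFDerivAt rfl).const_mul K
    rw [h1.fderiv]
    simp
    ring
  unfold lap pd
  simp only [hW, hp]
  have : n - 1 - 1 ≠ 0 := by omega
  simp [this]

/-- one mode -/
def mode (χ q κ P : ℝ → ℝ) (j c n : ℝ) (ζ : ℂ) : ℂ :=
  (χ (j * (ζ.re - c)) : ℂ) * Complex.exp ((q (j * (ζ.re - c)) : ℂ) +
    Complex.I * ((n * ζ.im + κ (j * (ζ.re - c)) * P (2 * j ^ 2 * ζ.im - π) : ℝ) : ℂ))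

theorem mode_norm (χ q κ P : ℝ → ℝ) (j c n : ℝ) (ζ : ℂ) :
    ‖mode χ q κ P j c n ζ‖ = |χ (j * (ζ.re - c))| * Real.exp (q (j * (ζ.re - c))) := by
  rw [mode, norm_mul, Complex.norm_exp, Complex.norm_real]
  simp

/-- the Laplacian of a mode -/
def modeLap (χ χ1 χ2 q1 q2 κ κ1 κ2 P P1 P2 : ℝ) (j n : ℝ) : ℂ :=
  j ^ 2 * (χ2 + 2 * χ1 * (q1 + Complex.I * (κ1 * P)) +
    χ * (q2 + Complex.I * (κ2 * P) + (q1 + Complex.I * (κ1 * P)) ^ 2)) +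
  χ * (-(n + κ * (P1 * (2 * j ^ 2))) ^ 2 + Complex.I * (κ * (P2 * (2 * j ^ 2) ^ 2)))

theorem mode_contDiff {χ q κ P : ℝ → ℝ} (j c n : ℝ) (hχ : ContDiff ℝ 2 χ) (hq : ContDiff ℝ 2 q)
    (hκ : ContDiff ℝ 2 κ) (hP : ContDiff ℝ 2 P) : ContDiff ℝ 2 (mode χ q κ P j c n) := by
  have hre : ContDiff ℝ 2 (fun ζ : ℂ => ζ.re) := Complex.reCLM.contDiff
  have him : ContDiff ℝ 2 (fun ζ : ℂ => ζ.im) := Complex.imCLM.contDiff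
  have hof : ContDiff ℝ 2 (fun x : ℝ => (x : ℂ)) := Complex.ofRealCLM.contDiff
  have ht : ContDiff ℝ 2 (fun ζ : ℂ => j * (ζ.re - c)) := contDiff_const.mul (hre.sub contDiff_const)
  have hg : ContDiff ℝ 2 (fun ζ : ℂ => 2 * j ^ 2 * ζ.im - π) :=
    (contDiff_const.mul him).sub contDiff_const
  unfold mode
  refine (hof.comp (hχ.comp ht)).mul (ContDiff.cexp ?_)
  refine (hof.comp (hq.comp ht)).add (contDiff_const.mul (hof.comp ?_))
  exact (contDiff_const.mul him).add ((hκ.comp ht).mul (hP.comp hg))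

theorem mode_hasLap {χ χ1 χ2 q q1 q2 κ κ1 κ2 P P1 P2 : ℝ → ℝ} (j c n : ℝ)
    (hχ : D2 χ χ1 χ2) (hq : D2 q q1 q2) (hκ : D2 κ κ1 κ2) (hP : D2 P P1 P2) (ζ : ℂ) {τ γ : ℝ}
    (hτ : τ = j * (ζ.re - c)) (hγ : γ = 2 * j ^ 2 * ζ.im - π) :
    HasLap (mode χ q κ P j c n)
      (modeLap (χ τ) (χ1 τ) (χ2 τ) (q1 τ) (q2 τ) (κ τ) (κ1 τ) (κ2 τ) (P γ) (P1 γ) (P2 γ) j n *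
        Complex.exp ((q τ : ℂ) + Complex.I * ((n * ζ.im + κ τ * P γ : ℝ) : ℂ))) ζ := by
  subst hτ hγ
  have hc := mode_contDiff j c n hχ.1 hq.1 hκ.1 hP.1
  refine ⟨hc.contDiffAt, ?_⟩
  have D : ∀ {f g : ℝ → ℝ}, (∀ x, HasDerivAt f (g x) x) → ∀ a b : ℝ,
      HasDerivAt (fun t : ℝ => ((f (a + t * b) : ℝ) : ℂ)) ((g a : ℂ) * b) 0 := by
    intro f g h a b
    have h1 : HasDerivAt (fun t : ℝ => a + t * b) b 0 := by
      simpa using ((hasDerivAt_id (0:ℝ)).mul_const b).const_add a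
    have h2 : HasDerivAt (fun t : ℝ => f (a + t * b)) (g a * b) 0 := by
      have h3 : HasDerivAt f (g a) (a + 0 * b) := by simpa using h a
      exact h3.comp (0:ℝ) h1
    simpa using h2.ofReal_comp
  have S := second_slice (v := 1) (ζ := ζ) hc
    (Gv := fun ζ => j * ((χ1 (j * (ζ.re - c)) : ℂ) + χ (j * (ζ.re - c)) *
      (q1 (j * (ζ.re - c)) + Complex.I * (κ1 (j * (ζ.re - c)) * P (2 * j ^ 2 * ζ.im - π)))) *
      Complex.exp ((q (j * (ζ.re - c)) : ℂ) +
        Complex.I * ((n * ζ.im + κ (j * (ζ.re - c)) * P (2 * j ^ 2 * ζ.im - π) : ℝ) : ℂ)))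
    (Gvv := j ^ 2 * (χ2 (j * (ζ.re - c)) + 2 * χ1 (j * (ζ.re - c)) * (q1 (j * (ζ.re - c)) +
        Complex.I * (κ1 (j * (ζ.re - c)) * P (2 * j ^ 2 * ζ.im - π))) +
      χ (j * (ζ.re - c)) * (q2 (j * (ζ.re - c)) +
        Complex.I * (κ2 (j * (ζ.re - c)) * P (2 * j ^ 2 * ζ.im - π)) + (q1 (j * (ζ.re - c)) +
        Complex.I * (κ1 (j * (ζ.re - c)) * P (2 * j ^ 2 * ζ.im - π))) ^ 2)) *
      Complex.exp ((q (j * (ζ.re - c)) : ℂ) +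
        Complex.I * ((n * ζ.im + κ (j * (ζ.re - c)) * P (2 * j ^ 2 * ζ.im - π) : ℝ) : ℂ)))
    (by
      intro z
      have e : ∀ t : ℝ, j * ((z + t * 1 : ℂ).re - c) = j * (z.re - c) + t * j := by
        intro t; simp; ring
      have e2 : ∀ t : ℝ, (z + t * 1 : ℂ).im = z.im := by intro t; simp
      unfold mode
      simp only [e, e2]
      have a1 := D hχ.2.1 (j * (z.re - c)) j
      have a2 := D hq.2.1 (j * (z.re - c)) j
      have a3 := D hκ.2.1 (j * (z.re - c)) j
      push_cast
      have := a1.mul ((a2.add (((a3.mul_const (P (2 * j ^ 2 * z.im - π) : ℂ)).const_add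
        (n * z.im : ℂ)).const_mul Complex.I)).cexp)
      refine HasDerivAt.congr_deriv this ?_
      simp
      ring)
    (by
      have e : ∀ t : ℝ, j * ((ζ + t * 1 : ℂ).re - c) = j * (ζ.re - c) + t * j := by
        intro t; simp; ring
      have e2 : ∀ t : ℝ, (ζ + t * 1 : ℂ).im = ζ.im := by intro t; simp
      simp only [e, e2]
      have a1 := D hχ.2.1 (j * (ζ.re - c)) j
      have a2 := D hq.2.1 (j * (ζ.re - c)) j
      have a3 := D hκ.2.1 (j * (ζ.re - c)) j
      have b1 := D hχ.2.2 (j * (ζ.re - c)) j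
      have b2 := D hq.2.2 (j * (ζ.re - c)) j
      have b3 := D hκ.2.2 (j * (ζ.re - c)) j
      push_cast
      have := ((b1.add (a1.mul (b2.add ((b3.mul_const (P (2 * j ^ 2 * ζ.im - π) : ℂ)).const_mul
        Complex.I)))).const_mul (j : ℂ)).mul ((a2.add (((a3.mul_const
        (P (2 * j ^ 2 * ζ.im - π) : ℂ)).const_add (n * ζ.im : ℂ)).const_mul Complex.I)).cexp)
      refine HasDerivAt.congr_deriv this ?_
      simp
      ring)
  have T := second_slice (v := Complex.I) (ζ := ζ) hc
    (Gv := fun ζ => (χ (j * (ζ.re - c)) : ℂ) *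
      (Complex.I * (n + κ (j * (ζ.re - c)) * (P1 (2 * j ^ 2 * ζ.im - π) * (2 * j ^ 2)))) *
      Complex.exp ((q (j * (ζ.re - c)) : ℂ) +
        Complex.I * ((n * ζ.im + κ (j * (ζ.re - c)) * P (2 * j ^ 2 * ζ.im - π) : ℝ) : ℂ)))
    (Gvv := χ (j * (ζ.re - c)) * (-(n + κ (j * (ζ.re - c)) * (P1 (2 * j ^ 2 * ζ.im - π) *
        (2 * j ^ 2))) ^ 2 + Complex.I * (κ (j * (ζ.re - c)) *
        (P2 (2 * j ^ 2 * ζ.im - π) * (2 * j ^ 2) ^ 2))) *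
      Complex.exp ((q (j * (ζ.re - c)) : ℂ) +
        Complex.I * ((n * ζ.im + κ (j * (ζ.re - c)) * P (2 * j ^ 2 * ζ.im - π) : ℝ) : ℂ)))
    (by
      intro z
      have e : ∀ t : ℝ, (z + t * Complex.I : ℂ).re = z.re := by
        intro t; simp
      have e2 : ∀ t : ℝ, 2 * j ^ 2 * (z + t * Complex.I : ℂ).im - π = (2 * j ^ 2 * z.im - π) + t * (2 * j ^ 2) := by
        intro t; simp; ring
      have e3 : ∀ t : ℝ, (z + t * Complex.I : ℂ).im = z.im + t * 1 := by intro t; simp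
      unfold mode
      simp only [e2, e]
      simp only [e3]
      have a1 := D hP.2.1 (2 * j ^ 2 * z.im - π) (2 * j ^ 2)
      have a2 := D (f := fun x => x) (g := fun _ => 1) (fun x => hasDerivAt_id x) z.im 1
      push_cast at a1 a2 ⊢
      have := ((((a2.const_mul (n : ℂ)).add (a1.const_mul (κ (j * (z.re - c)) : ℂ))).const_mul
        Complex.I).const_add (q (j * (z.re - c)) : ℂ)).cexp.const_mul (χ (j * (z.re - c)) : ℂ)
      refine HasDerivAt.congr_deriv this ?_
      simp
      ring)
    (by
      have e : ∀ t : ℝ, (ζ + t * Complex.I : ℂ).re = ζ.re := by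
        intro t; simp
      have e2 : ∀ t : ℝ, 2 * j ^ 2 * (ζ + t * Complex.I : ℂ).im - π = (2 * j ^ 2 * ζ.im - π) + t * (2 * j ^ 2) := by
        intro t; simp; ring
      have e3 : ∀ t : ℝ, (ζ + t * Complex.I : ℂ).im = ζ.im + t * 1 := by intro t; simp
      simp only [e2, e]
      simp only [e3]
      have a1 := D hP.2.1 (2 * j ^ 2 * ζ.im - π) (2 * j ^ 2)
      have b1 := D hP.2.2 (2 * j ^ 2 * ζ.im - π) (2 * j ^ 2)
      have a2 := D (f := fun x => x) (g := fun _ => 1) (fun x => hasDerivAt_id x) ζ.im 1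
      push_cast at a1 a2 b1 ⊢
      have := ((((b1.mul_const (2 * j ^ 2 : ℂ)).const_mul (κ (j * (ζ.re - c)) : ℂ)).const_add
        (n : ℂ)).const_mul Complex.I).const_mul (χ (j * (ζ.re - c)) : ℂ) |>.mul
        ((((a2.const_mul (n : ℂ)).add (a1.const_mul (κ (j * (ζ.re - c)) : ℂ))).const_mul
        Complex.I).const_add (q (j * (ζ.re - c)) : ℂ)).cexp
      refine HasDerivAt.congr_deriv this ?_
      simp
      linear_combination (χ (j * (ζ.re - c)) : ℂ) * (n + κ (j * (ζ.re - c)) * (P1 (2 * j ^ 2 * ζ.im - π) *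
        (2 * j ^ 2))) ^ 2 * Complex.exp ((q (j * (ζ.re - c)) : ℂ) +
        Complex.I * (n * ζ.im + κ (j * (ζ.re - c)) * P (2 * j ^ 2 * ζ.im - π))) * Complex.I_sq)
  rw [S, T, modeLap]
  ring


theorem modeLap_bound (K : ℝ) (hK : 1 ≤ K) : ∃ C : ℝ, 0 ≤ C ∧
    ∀ χ χ1 χ2 q1 q2 κ κ1 κ2 P P1 P2 j n E : ℝ, 1 ≤ j → |χ| ≤ K → |χ1| ≤ K → |χ2| ≤ K →
    |q1 + j / 2| ≤ K → |q2| ≤ K → |κ * j| ≤ K → |κ1| ≤ K → |κ2| ≤ K → |P| ≤ K → |P1| ≤ K →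
    |P2| ≤ K → |n| ≤ K * j ^ 2 → |j ^ 4 - n ^ 2| ≤ K * j ^ 3 → |E - j ^ 4| ≤ K * j ^ 3 →
    ‖modeLap χ χ1 χ2 q1 q2 κ κ1 κ2 P P1 P2 j n + 3 / 4 * E * χ‖ ≤ C * j ^ 3 := by
  set K2 := 1 + K + K ^ 2 with hK2
  refine ⟨K + 2 * K * K2 + K * (K + K ^ 2) + K * ((K + K ^ 2) * (K2 + 1)) +
    K * (K + 4 * K ^ 3 + 4 * K ^ 4) + K * (4 * K ^ 2) + K * K, by positivity, ?_⟩
  intro χ χ1 χ2 q1 q2 κ κ1 κ2 P P1 P2 j n E hj hχ hχ1 hχ2 hq1 hq2 hκ hκ1 hκ2 hP hP1 hP2 hn hn2 hE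
  have hj0 : 0 < j := by linarith
  have N : ∀ x : ℝ, ‖(x : ℂ)‖ = |x| := fun x => by simp
  have hjj : j ≤ j ^ 2 := by nlinarith
  have hj23 : j ^ 2 ≤ j ^ 3 := by nlinarith [sq_nonneg j]
  set Q : ℂ := q1 + Complex.I * (κ1 * P) with hQ
  have hIP : ∀ x : ℝ, |x| ≤ K → ‖Complex.I * ((x : ℂ) * P)‖ ≤ K ^ 2 := by
    intro x hx
    rw [norm_mul, Complex.norm_I, one_mul, norm_mul, N, N, sq]
    gcongr
  have hQ1 : ‖Q + j / 2‖ ≤ K + K ^ 2 := by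
    have e : Q + j / 2 = ((q1 + j / 2 : ℝ) : ℂ) + Complex.I * (κ1 * P) := by rw [hQ]; push_cast; ring
    rw [e]
    exact (norm_add_le _ _).trans (add_le_add (by rw [N]; exact hq1) (hIP _ hκ1))
  have hjn : ‖(j : ℂ)‖ = j := by rw [N, abs_of_pos hj0]
  have hQ2 : ‖Q - j / 2‖ ≤ (K2 + 1) * j - 1 * j := by
    have e : Q - j / 2 = (Q + j / 2) - j := by ring
    rw [e]
    refine (norm_sub_le _ _).trans ?_
    rw [hjn, hK2]
    nlinarith [hQ1, sq_nonneg K]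
  have hQ3 : ‖Q‖ ≤ K2 * j := by
    have e : Q = (Q + j / 2) - ((j / 2 : ℝ) : ℂ) := by push_cast; ring
    rw [e]
    refine (norm_sub_le _ _).trans ?_
    rw [N, abs_of_pos (by positivity : 0 < j / 2), hK2]
    nlinarith [hQ1, sq_nonneg K]
  have dec : modeLap χ χ1 χ2 q1 q2 κ κ1 κ2 P P1 P2 j n + 3 / 4 * E * χ =
      ((j ^ 2 * χ2 : ℝ) : ℂ) + ((2 * j ^ 2 * χ1 : ℝ) : ℂ) * Q +
      ((j ^ 2 * χ : ℝ) : ℂ) * (q2 + Complex.I * (κ2 * P)) +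
      ((j ^ 2 * χ : ℝ) : ℂ) * ((Q + j / 2) * (Q - j / 2)) +
      ((χ * ((j ^ 4 - n ^ 2) - 4 * j * n * ((κ * j) * P1) - 4 * j ^ 2 * ((κ * j) * P1) ^ 2) : ℝ) : ℂ) +
      Complex.I * ((χ * (4 * j ^ 3 * ((κ * j) * P2)) : ℝ) : ℂ) +
      ((χ * (3 / 4 * (E - j ^ 4)) : ℝ) : ℂ) := by
    rw [modeLap, hQ]; push_cast; ring
  rw [dec]
  have hj2 : |j ^ 2| = j ^ 2 := abs_of_pos (by positivity)
  have t1 : ‖((j ^ 2 * χ2 : ℝ) : ℂ)‖ ≤ K * j ^ 3 := by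
    rw [N, abs_mul, hj2]
    nlinarith [abs_nonneg χ2]
  have t2 : ‖((2 * j ^ 2 * χ1 : ℝ) : ℂ) * Q‖ ≤ 2 * K * K2 * j ^ 3 := by
    rw [norm_mul, N, abs_mul, abs_mul, hj2, abs_two]
    calc 2 * j ^ 2 * |χ1| * ‖Q‖ ≤ 2 * j ^ 2 * K * (K2 * j) := by gcongr
      _ = _ := by ring
  have hχj : ‖((j ^ 2 * χ : ℝ) : ℂ)‖ ≤ K * j ^ 2 := by
    rw [N, abs_mul, hj2, mul_comm]; gcongr
  have t3 : ‖((j ^ 2 * χ : ℝ) : ℂ) * (q2 + Complex.I * (κ2 * P))‖ ≤ K * (K + K ^ 2) * j ^ 3 := by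
    rw [norm_mul]
    have : ‖(q2 : ℂ) + Complex.I * (κ2 * P)‖ ≤ K + K ^ 2 :=
      (norm_add_le _ _).trans (add_le_add (by rw [N]; exact hq2) (hIP _ hκ2))
    calc _ ≤ (K * j ^ 2) * (K + K ^ 2) := by gcongr
      _ = K * (K + K ^ 2) * j ^ 2 := by ring
      _ ≤ _ := by gcongr
  have t4 : ‖((j ^ 2 * χ : ℝ) : ℂ) * ((Q + j / 2) * (Q - j / 2))‖ ≤
      K * ((K + K ^ 2) * (K2 + 1)) * j ^ 3 := by
    rw [norm_mul, norm_mul]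
    have : ‖Q - j / 2‖ ≤ (K2 + 1) * j := by linarith
    calc _ ≤ (K * j ^ 2) * ((K + K ^ 2) * ((K2 + 1) * j)) := by gcongr
      _ = _ := by ring
  have w1 : ∀ x, |x| ≤ K → |(κ * j) * x| ≤ K ^ 2 := by
    intro x hx; rw [abs_mul, sq]; gcongr
  have t5 : ‖((χ * ((j ^ 4 - n ^ 2) - 4 * j * n * ((κ * j) * P1) - 4 * j ^ 2 * ((κ * j) * P1) ^ 2) : ℝ) : ℂ)‖
      ≤ K * (K + 4 * K ^ 3 + 4 * K ^ 4) * j ^ 3 := by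
    rw [N, abs_mul]
    have a1 : |4 * j * n * ((κ * j) * P1)| ≤ 4 * K ^ 3 * j ^ 3 := by
      rw [abs_mul, abs_mul, abs_of_pos (by positivity : 0 < 4 * j)]
      calc _ ≤ 4 * j * (K * j ^ 2) * K ^ 2 := by gcongr; exact w1 _ hP1
        _ = _ := by ring
    have a2 : |4 * j ^ 2 * ((κ * j) * P1) ^ 2| ≤ 4 * K ^ 4 * j ^ 3 := by
      rw [abs_mul, abs_of_pos (by positivity : 0 < 4 * j ^ 2), abs_pow]
      calc _ ≤ 4 * j ^ 3 * (K ^ 2) ^ 2 := by gcongr; exact w1 _ hP1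
        _ = _ := by ring
    have a3 : |(j ^ 4 - n ^ 2) - 4 * j * n * ((κ * j) * P1) - 4 * j ^ 2 * ((κ * j) * P1) ^ 2| ≤
        (K + 4 * K ^ 3 + 4 * K ^ 4) * j ^ 3 := by
      refine (abs_sub _ _).trans ((add_le_add (abs_sub _ _) le_rfl).trans ?_)
      linarith
    calc _ ≤ K * ((K + 4 * K ^ 3 + 4 * K ^ 4) * j ^ 3) := by gcongr
      _ = _ := by ring
  have t6 : ‖Complex.I * ((χ * (4 * j ^ 3 * ((κ * j) * P2)) : ℝ) : ℂ)‖ ≤ K * (4 * K ^ 2) * j ^ 3 := by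
    rw [norm_mul, Complex.norm_I, one_mul, N, abs_mul, abs_mul,
      abs_of_pos (by positivity : 0 < 4 * j ^ 3)]
    calc _ ≤ K * (4 * j ^ 3 * K ^ 2) := by gcongr; exact w1 _ hP2
      _ = _ := by ring
  have t7 : ‖((χ * (3 / 4 * (E - j ^ 4)) : ℝ) : ℂ)‖ ≤ K * K * j ^ 3 := by
    rw [N, abs_mul, abs_mul, abs_of_pos (by norm_num : (0:ℝ) < 3 / 4)]
    calc _ ≤ K * (1 * (K * j ^ 3)) := by gcongr; norm_num
      _ = _ := by ring
  refine (norm_add_le_of_le (norm_add_le_of_le (norm_add_le_of_le (norm_add_le_of_le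
    (norm_add_le_of_le (norm_add_le_of_le t1 t2) t3) t4) t5) t6) t7).trans (le_of_eq ?_)
  ring

theorem two_exp_lower (x y ω1 ω2 c0 : ℝ) (h0 : 0 ≤ c0) (h1 : c0 < 1) (hc : -c0 ≤ cos (ω2 - ω1)) :
    (1 - c0) * (rexp x + rexp y) ≤ 2 * ‖Complex.exp ((x : ℂ) + Complex.I * (ω1 : ℂ)) +
      Complex.exp ((y : ℂ) + Complex.I * (ω2 : ℂ))‖ := by
  set X := rexp x
  set Y := rexp y
  have hX : 0 < X := exp_pos _
  have hY : 0 < Y := exp_pos _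
  have e : ‖Complex.exp ((x : ℂ) + Complex.I * (ω1 : ℂ)) +
      Complex.exp ((y : ℂ) + Complex.I * (ω2 : ℂ))‖ ^ 2 = X ^ 2 + Y ^ 2 + 2 * X * Y * cos (ω2 - ω1) := by
    rw [← Complex.normSq_eq_norm_sq, Complex.normSq_apply, Complex.add_re, Complex.add_im,
      Complex.exp_re, Complex.exp_im, Complex.exp_re, Complex.exp_im, cos_sub]
    simp only [Complex.add_re, Complex.ofReal_re, Complex.mul_re, Complex.I_re, Complex.I_im,
      Complex.ofReal_im, Complex.add_im, Complex.mul_im]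
    ring_nf
    nlinarith [sin_sq_add_cos_sq ω1, sin_sq_add_cos_sq ω2]
  have hlow : (1 - c0) * (X ^ 2 + Y ^ 2) ≤ ‖Complex.exp ((x : ℂ) + Complex.I * (ω1 : ℂ)) +
      Complex.exp ((y : ℂ) + Complex.I * (ω2 : ℂ))‖ ^ 2 := by
    rw [e]
    have := mul_le_mul_of_nonneg_left hc (by positivity : 0 ≤ 2 * X * Y)
    nlinarith [sq_nonneg (X - Y)]
  refine abs_le_of_sq_le_sq' ?_ (by positivity) |>.2
  have h3 : (1 - c0) ^ 2 ≤ 1 - c0 := by nlinarith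
  have h4 : (X + Y) ^ 2 ≤ 2 * (X ^ 2 + Y ^ 2) := by nlinarith [sq_nonneg (X - Y)]
  calc ((1 - c0) * (X + Y)) ^ 2 = (1 - c0) ^ 2 * (X + Y) ^ 2 := by ring
    _ ≤ (1 - c0) * (2 * (X ^ 2 + Y ^ 2)) := by gcongr
    _ ≤ _ := by nlinarith [sq_nonneg (‖Complex.exp ((x : ℂ) + Complex.I * (ω1 : ℂ)) +
      Complex.exp ((y : ℂ) + Complex.I * (ω2 : ℂ))‖)]


/-- fixed profile functions -/
structure Dat where
  (f f1 f2 b b1 b2 η η1 η2 P P1 P2 : ℝ → ℝ)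
  (K c : ℝ)
  hf : D2 f f1 f2
  hb : D2 b b1 b2
  hη : D2 η η1 η2
  hP : D2 P P1 P2
  hK : 1 ≤ K
  c0 : 0 ≤ c
  c1 : c < 1
  f01 : ∀ x, 0 ≤ f x ∧ f x ≤ 1
  b01 : ∀ x, 0 ≤ b x ∧ b x ≤ 1
  η01 : ∀ x, 0 ≤ η x ∧ η x ≤ 1
  fl : ∀ x, x ≤ -4/5 → f x = 0 ∧ f1 x = 0 ∧ f2 x = 0
  fr : ∀ x, -2/5 ≤ x → f x = 1 ∧ f1 x = 0 ∧ f2 x = 0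
  bl : ∀ x, x ≤ 3/10 → b x = 0 ∧ b1 x = 0 ∧ b2 x = 0
  br : ∀ x, 1/2 ≤ x → b x = 1 ∧ b1 x = 0 ∧ b2 x = 0
  ηl : ∀ x, x ≤ 3/5 → η x = 0 ∧ η1 x = 0 ∧ η2 x = 0
  ηr : ∀ x, 4/5 ≤ x → η x = 1 ∧ η1 x = 0 ∧ η2 x = 0
  fK : ∀ x, |f1 x| ≤ K ∧ |f2 x| ≤ K
  bK : ∀ x, |b1 x| ≤ K ∧ |b2 x| ≤ K
  ηK : ∀ x, |η1 x| ≤ K ∧ |η2 x| ≤ K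
  PK : ∀ x, |P x| ≤ K ∧ |P1 x| ≤ K ∧ |P2 x| ≤ K
  Pper : Function.Periodic P (2 * π)
  Pc : ∀ x, (P1 x = 1 ∧ P2 x = 0) ∨ cos x ≤ c

theorem exists_Dat : Nonempty Dat := by
  obtain ⟨f, f1, f2, hf, f01, fl, fr, Kf, fK⟩ := exists_cut (-4/5) (-2/5) (by norm_num)
  obtain ⟨b, b1, b2, hb, b01, bl, br, Kb, bK⟩ := exists_cut (3/10) (1/2) (by norm_num)
  obtain ⟨η, η1, η2, hη, η01, ηl, ηr, Kη, ηK⟩ := exists_cut (3/5) (4/5) (by norm_num)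
  obtain ⟨P, P1, P2, hP, Pper, KP, c, c0, c1, PK, Pc⟩ := exists_P
  set K := max 1 (max (max Kf Kb) (max Kη KP)) with hKdef
  have i1 : Kf ≤ K := le_max_of_le_right (le_max_of_le_left (le_max_left _ _))
  have i2 : Kb ≤ K := le_max_of_le_right (le_max_of_le_left (le_max_right _ _))
  have i3 : Kη ≤ K := le_max_of_le_right (le_max_of_le_right (le_max_left _ _))
  have i4 : KP ≤ K := le_max_of_le_right (le_max_of_le_right (le_max_right _ _))
  exact ⟨{ f := f, f1 := f1, f2 := f2, b := b, b1 := b1, b2 := b2, η := η, η1 := η1, η2 := η2,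
           P := P, P1 := P1, P2 := P2, K := K, c := c, hf := hf, hb := hb, hη := hη, hP := hP,
           hK := le_max_left _ _, c0 := c0, c1 := c1, f01 := f01, b01 := b01, η01 := η01,
           fl := fl, fr := fr, bl := bl, br := br, ηl := ηl, ηr := ηr,
           fK := fun x => ⟨(fK x).1.trans i1, (fK x).2.trans i1⟩
           bK := fun x => ⟨(bK x).1.trans i2, (bK x).2.trans i2⟩
           ηK := fun x => ⟨(ηK x).1.trans i3, (ηK x).2.trans i3⟩
           PK := fun x => ⟨(PK x).1.trans i4, (PK x).2.1.trans i4, (PK x).2.2.trans i4⟩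
           Pper := Pper, Pc := Pc }⟩

def qA (a j : ℝ) (τ : ℝ) : ℝ := a - (j + 5) / 2 * τ
def qB (d : Dat) (a j : ℝ) (τ : ℝ) : ℝ := a - (j + 5) / 2 * τ + 8 * τ - (9 + 3 / j) * (d.η τ * τ)
def kB (d : Dat) (σ j : ℝ) (τ : ℝ) : ℝ := -(σ * (3 / j)) * (1 - d.η τ)

theorem D2_qA (a j : ℝ) : D2 (qA a j) (fun _ => -((j + 5) / 2)) (fun _ => 0) := by
  refine ⟨?_, fun x => ?_, fun x => hasDerivAt_const _ _⟩
  · unfold qA; fun_prop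
  · have := ((hasDerivAt_id x).const_mul ((j + 5) / 2)).const_sub a
    refine HasDerivAt.congr_deriv this ?_
    ring

theorem D2_one_sub_b (d : Dat) : D2 (fun x => 1 - d.b x) (fun x => -d.b1 x) (fun x => -d.b2 x) :=
  ⟨contDiff_const.sub d.hb.1, fun x => (d.hb.2.1 x).const_sub 1, fun x => (d.hb.2.2 x).neg⟩

theorem D2_zero : D2 (fun _ => 0) (fun _ => 0) (fun _ => 0) :=
  ⟨contDiff_const, fun x => hasDerivAt_const _ _, fun x => hasDerivAt_const _ _⟩

theorem D2_qB (d : Dat) (a j : ℝ) : D2 (qB d a j)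
    (fun τ => -((j + 5) / 2) + 8 - (9 + 3 / j) * (d.η1 τ * τ + d.η τ))
    (fun τ => -((9 + 3 / j) * (d.η2 τ * τ + 2 * d.η1 τ))) := by
  refine ⟨?_, fun x => ?_, fun x => ?_⟩
  · unfold qB
    have := d.hη.1
    fun_prop
  · have := ((((hasDerivAt_id x).const_mul ((j + 5) / 2)).const_sub a).add
      ((hasDerivAt_id x).const_mul 8)).sub (((d.hη.2.1 x).mul (hasDerivAt_id x)).const_mul (9 + 3 / j))
    refine HasDerivAt.congr_deriv this ?_
    simp
  · have := ((((d.hη.2.2 x).mul (hasDerivAt_id x)).add (d.hη.2.1 x)).const_mul (9 + 3 / j)).const_sub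
      (-((j + 5) / 2) + 8)
    refine HasDerivAt.congr_deriv this ?_
    simp only [id]
    ring

theorem D2_kB (d : Dat) (σ j : ℝ) : D2 (kB d σ j)
    (fun τ => σ * (3 / j) * d.η1 τ) (fun τ => σ * (3 / j) * d.η2 τ) := by
  refine ⟨?_, fun x => ?_, fun x => ?_⟩
  · unfold kB
    exact contDiff_const.mul (contDiff_const.sub d.hη.1)
  · have := ((d.hη.2.1 x).const_sub 1).const_mul (-(σ * (3 / j)))
    refine HasDerivAt.congr_deriv this ?_
    ring
  · exact (d.hη.2.2 x).const_mul _

def blkA (d : Dat) (a σ j c : ℝ) : ℂ → ℂ :=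
  mode (fun x => 1 - d.b x) (qA a j) (fun _ => 0) d.P j c (-(σ * (j * (j - 1))))
def blkB (d : Dat) (a σ j c : ℝ) : ℂ → ℂ :=
  mode d.f (qB d a j) (kB d σ j) d.P j c (σ * (j * (j + 1)))



theorem AB_bound (d : Dat) : ∃ C : ℝ, 0 ≤ C ∧ ∀ σ j τ γ E : ℝ, 1 ≤ j → (σ = 1 ∨ σ = -1) →
    |τ| ≤ 1 → |E - j ^ 4| ≤ 15 * j ^ 3 →
    ‖modeLap (1 - d.b τ) (-d.b1 τ) (-d.b2 τ) (-((j + 5) / 2)) 0 0 0 0 (d.P γ) (d.P1 γ) (d.P2 γ) j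
      (-(σ * (j * (j - 1)))) + 3 / 4 * E * (1 - d.b τ : ℝ)‖ ≤ C * j ^ 3 ∧
    ‖modeLap (d.f τ) (d.f1 τ) (d.f2 τ) (-((j + 5) / 2) + 8 - (9 + 3 / j) * (d.η1 τ * τ + d.η τ))
      (-((9 + 3 / j) * (d.η2 τ * τ + 2 * d.η1 τ))) (kB d σ j τ) (σ * (3 / j) * d.η1 τ)
      (σ * (3 / j) * d.η2 τ) (d.P γ) (d.P1 γ) (d.P2 γ) j (σ * (j * (j + 1)))
      + 3 / 4 * E * d.f τ‖ ≤ C * j ^ 3 := by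
  have hK := d.hK
  obtain ⟨K, hKdef⟩ : ∃ K, K = 40 * d.K := ⟨_, rfl⟩
  have hK1 : 1 ≤ K := by linarith
  obtain ⟨C, hC, hbd⟩ := modeLap_bound K hK1
  refine ⟨C, hC, ?_⟩
  intro σ j τ γ E hj hσ hτ1 hE
  have hjp : 0 < j := by linarith
  have hσ2 : σ ^ 2 = 1 := by rcases hσ with h | h <;> rw [h] <;> norm_num
  have hσa : |σ| = 1 := by rcases hσ with h | h <;> rw [h] <;> norm_num
  have h3j : |3 / j| ≤ 3 := by
    rw [abs_of_pos (by positivity)]; exact div_le_self (by norm_num) hj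
  have h9 : |9 + 3 / j| ≤ 12 := (abs_add_le _ _).trans (by rw [abs_of_pos (by norm_num : (0:ℝ) < 9)]; linarith)
  obtain ⟨k1, k2⟩ := d.ηK τ
  obtain ⟨p0, p1, p2⟩ := d.PK γ
  have hPK : ∀ x, |x| ≤ d.K → |x| ≤ K := fun x hx => by rw [hKdef]; linarith
  have unit : ∀ x : ℝ, 0 ≤ x ∧ x ≤ 1 → |x| ≤ 1 := fun x hx => abs_le.2 ⟨by linarith [hx.1], hx.2⟩
  have hη1 : |d.η τ| ≤ 1 := unit _ (d.η01 τ)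
  have ητ : ∀ x, |x| ≤ d.K → |x * τ| ≤ d.K := fun x hx => by
    rw [abs_mul]; nlinarith [abs_nonneg x, abs_nonneg τ]
  have hj34 : j ^ 2 ≤ j ^ 3 := by nlinarith [sq_nonneg j]
  have hj3 : 0 < j ^ 3 := by positivity
  have hjj : j ≤ j ^ 2 := by nlinarith
  have hKj : 40 * j ^ 3 ≤ K * j ^ 3 := by gcongr; linarith
  have hKj2 : 40 * j ^ 2 ≤ K * j ^ 2 := by gcongr; linarith
  have hEK : |E - j ^ 4| ≤ K * j ^ 3 := hE.trans (by linarith)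
  have z0 : |(0:ℝ)| ≤ K := by rw [abs_zero]; linarith
  constructor
  · refine hbd (1 - d.b τ) (-d.b1 τ) (-d.b2 τ) (-((j + 5) / 2)) 0 0 0 0 (d.P γ) (d.P1 γ) (d.P2 γ) j
      (-(σ * (j * (j - 1)))) E hj
      ((unit _ ⟨by linarith [(d.b01 τ).2], by linarith [(d.b01 τ).1]⟩).trans hK1)
      (by rw [abs_neg]; exact hPK _ (d.bK τ).1) (by rw [abs_neg]; exact hPK _ (d.bK τ).2)
      ?_ z0 (by rw [zero_mul]; exact z0) z0 z0
      (hPK _ p0) (hPK _ p1) (hPK _ p2) ?_ ?_ hEK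
    · rw [show -((j + 5) / 2) + j / 2 = -(5/2) by ring, abs_neg, abs_of_pos (by norm_num)]; linarith
    · have : 0 ≤ j * (j - 1) := mul_nonneg hjp.le (by linarith)
      rw [abs_neg, abs_mul, hσa, one_mul, abs_of_nonneg this]
      nlinarith
    · have e : j ^ 4 - (-(σ * (j * (j - 1)))) ^ 2 = 2 * j ^ 3 - j ^ 2 := by
        calc _ = j ^ 4 - σ ^ 2 * (j * (j - 1)) ^ 2 := by ring
          _ = _ := by rw [hσ2]; ring
      rw [e, abs_le]
      constructor <;> linarith [sq_nonneg j]
  · refine hbd (d.f τ) (d.f1 τ) (d.f2 τ) (-((j + 5) / 2) + 8 - (9 + 3 / j) * (d.η1 τ * τ + d.η τ))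
      (-((9 + 3 / j) * (d.η2 τ * τ + 2 * d.η1 τ))) (kB d σ j τ) (σ * (3 / j) * d.η1 τ)
      (σ * (3 / j) * d.η2 τ) (d.P γ) (d.P1 γ) (d.P2 γ) j (σ * (j * (j + 1))) E hj
      ((unit _ (d.f01 τ)).trans hK1) (hPK _ (d.fK τ).1) (hPK _ (d.fK τ).2)
      ?_ ?_ ?_ ?_ ?_ (hPK _ p0) (hPK _ p1) (hPK _ p2) ?_ ?_ hEK
    · have e : -((j + 5) / 2) + 8 - (9 + 3 / j) * (d.η1 τ * τ + d.η τ) + j / 2 =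
        11 / 2 - (9 + 3 / j) * (d.η1 τ * τ + d.η τ) := by ring
      rw [e]
      refine (abs_sub _ _).trans ?_
      rw [abs_mul, abs_of_pos (by norm_num : (0:ℝ) < 11 / 2)]
      have : |d.η1 τ * τ + d.η τ| ≤ 2 * d.K := (abs_add_le _ _).trans (by linarith [ητ _ k1])
      have : |9 + 3 / j| * |d.η1 τ * τ + d.η τ| ≤ 12 * (2 * d.K) := by gcongr
      linarith
    · rw [abs_neg, abs_mul]
      have : |d.η2 τ * τ + 2 * d.η1 τ| ≤ 3 * d.K := (abs_add_le _ _).trans (by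
        rw [abs_mul 2, abs_two]; linarith [ητ _ k2])
      have : |9 + 3 / j| * |d.η2 τ * τ + 2 * d.η1 τ| ≤ 12 * (3 * d.K) := by gcongr
      linarith
    · have e : kB d σ j τ * j = -(σ * 3 * (1 - d.η τ)) := by
        rw [kB]; field_simp
      rw [e, abs_neg, abs_mul, abs_mul, hσa]
      have := unit (1 - d.η τ) ⟨by linarith [(d.η01 τ).2], by linarith [(d.η01 τ).1]⟩
      rw [abs_of_pos (by norm_num : (0:ℝ) < 3)]
      linarith
    · rw [abs_mul, abs_mul, hσa, one_mul]
      have : |3 / j| * |d.η1 τ| ≤ 3 * d.K := by gcongr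
      linarith
    · rw [abs_mul, abs_mul, hσa, one_mul]
      have : |3 / j| * |d.η2 τ| ≤ 3 * d.K := by gcongr
      linarith
    · have : 0 ≤ j * (j + 1) := by positivity
      rw [abs_mul, hσa, one_mul, abs_of_nonneg this]
      nlinarith
    · have e : j ^ 4 - (σ * (j * (j + 1))) ^ 2 = -(2 * j ^ 3 + j ^ 2) := by
        calc _ = j ^ 4 - σ ^ 2 * (j * (j + 1)) ^ 2 := by ring
          _ = _ := by rw [hσ2]; ring
      rw [e, abs_le]
      constructor <;> linarith [sq_nonneg j]

/-- combination of two modes, pure inequality -/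
theorem comb_est {MA MB eA eB : ℂ} {E cA cB C J xA xB k : ℝ}
    (hA : ‖MA + 3 / 4 * E * cA‖ ≤ C * J) (hB : ‖MB + 3 / 4 * E * cB‖ ≤ C * J)
    (nA : ‖eA‖ = xA) (nB : ‖eB‖ = xB) (hCJ : 0 ≤ C * J)
    (hU : xA + xB ≤ k * ‖(cA : ℂ) * eA + cB * eB‖) :
    ‖(MA * eA + MB * eB) + 3 / 4 * (E : ℂ) * (cA * eA + cB * eB)‖ ≤
      k * C * J * ‖(cA : ℂ) * eA + cB * eB‖ := by
  have e : (MA * eA + MB * eB) + 3 / 4 * (E : ℂ) * (cA * eA + cB * eB) =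
      (MA + 3 / 4 * E * cA) * eA + (MB + 3 / 4 * E * cB) * eB := by ring
  rw [e]
  refine (norm_add_le _ _).trans ?_
  rw [norm_mul, norm_mul, nA, nB]
  have a1 : 0 ≤ xA := nA ▸ norm_nonneg _
  have a2 : 0 ≤ xB := nB ▸ norm_nonneg _
  calc _ ≤ C * J * xA + C * J * xB := by gcongr
    _ = C * J * (xA + xB) := by ring
    _ ≤ C * J * (k * ‖(cA : ℂ) * eA + cB * eB‖) := by gcongr
    _ = _ := by ring

theorem comb_est_one {MA eA : ℂ} {E cA C J : ℝ}
    (hA : ‖MA + 3 / 4 * E * cA‖ ≤ C * J) :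
    ‖(MA * eA) + 3 / 4 * (E : ℂ) * (cA * eA)‖ ≤ C * J * ‖eA‖ := by
  have e : (MA * eA) + 3 / 4 * (E : ℂ) * (cA * eA) = (MA + 3 / 4 * E * cA) * eA := by ring
  rw [e, norm_mul]
  gcongr


theorem sum_dom {eA eB : ℂ} {c xA xB : ℝ} (hc : 0 ≤ c ∧ c ≤ 1) (nA : ‖eA‖ = xA) (nB : ‖eB‖ = xB)
    (h : xB ≤ xA / 2) : xA + xB ≤ 4 * ‖eA + (c : ℂ) * eB‖ := by
  have h1 : ‖(c : ℂ) * eB‖ ≤ xB := by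
    rw [norm_mul, nB, Complex.norm_real, Real.norm_eq_abs, abs_of_nonneg hc.1]
    have : 0 ≤ xB := nB ▸ norm_nonneg _
    nlinarith [hc.2]
  have h2 := norm_sub_le_norm_add eA ((c : ℂ) * eB)
  have h3 : 0 ≤ xA := nA ▸ norm_nonneg _
  linarith

theorem exp_half {x y : ℝ} (h : y ≤ x - 1) : rexp y ≤ rexp x / 2 := by
  have h1 : rexp y ≤ rexp (x - 1) := exp_le_exp.2 h
  have h2 : 2 ≤ rexp 1 := by linarith [add_one_le_exp (1:ℝ)]
  have h3 : rexp (x - 1) * rexp 1 = rexp x := by rw [← exp_add]; ring_nf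
  nlinarith [exp_pos (x - 1)]

theorem block_est (d : Dat) : ∃ C j0 : ℝ, 0 ≤ C ∧ ∀ a σ j c : ℝ, ∀ ζ : ℂ, j0 ≤ j → 1 ≤ j →
    (σ = 1 ∨ σ = -1) → |j * (ζ.re - c)| ≤ 1 → |rexp (2 * ζ.re) - j ^ 4| ≤ 15 * j ^ 3 →
    ∃ L, HasLap (fun z => blkA d a σ j c z + blkB d a σ j c z) L ζ ∧
      ‖L + 3 / 4 * (rexp (2 * ζ.re) : ℂ) * (blkA d a σ j c ζ + blkB d a σ j c ζ)‖ ≤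
        C * j ^ 3 * ‖blkA d a σ j c ζ + blkB d a σ j c ζ‖ := by
  have hK := d.hK
  obtain ⟨C, hC, hbd⟩ := AB_bound d
  have hc1 := d.c1
  have hc0 := d.c0
  obtain ⟨c', hc'⟩ : ∃ c', c' = (1 + d.c) / 2 := ⟨_, rfl⟩
  have hc'1 : c' < 1 := by rw [hc']; linarith
  have hc'0 : 0 ≤ c' := by rw [hc']; linarith
  obtain ⟨k, hk⟩ : ∃ k, k = 4 * (1 - c')⁻¹ := ⟨_, rfl⟩
  have hk1 : k * (1 - c') = 4 := by
    rw [hk]; field_simp [show (1 - c') ≠ 0 by linarith]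
  have hk4 : 4 ≤ k := by
    rw [hk]
    have := (one_le_inv₀ (by linarith : 0 < 1 - c')).2 (by linarith)
    linarith
  refine ⟨k * C, 3 * d.K / ((1 - d.c) / 2), by positivity, ?_⟩
  intro a σ j c ζ hj0 hj hσ hτ1 hE
  have hjp : 0 < j := by linarith
  have hσ2 : σ ^ 2 = 1 := by rcases hσ with h | h <;> rw [h] <;> norm_num
  obtain ⟨τ, hτ⟩ : ∃ τ, τ = j * (ζ.re - c) := ⟨_, rfl⟩
  obtain ⟨γ, hγ⟩ : ∃ γ, γ = 2 * j ^ 2 * ζ.im - π := ⟨_, rfl⟩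
  obtain ⟨E, hEdef⟩ : ∃ E, E = rexp (2 * ζ.re) := ⟨_, rfl⟩
  rw [← hτ] at hτ1
  rw [← hEdef] at hE ⊢
  obtain ⟨bA, bB⟩ := hbd σ j τ γ E hj hσ hτ1 hE
  have lA := mode_hasLap j c (-(σ * (j * (j - 1)))) (D2_one_sub_b d) (D2_qA a j) D2_zero d.hP ζ hτ hγ
  have lB := mode_hasLap j c (σ * (j * (j + 1))) d.hf (D2_qB d a j) (D2_kB d σ j) d.hP ζ hτ hγ
  refine ⟨_, lA.add lB, ?_⟩
  have vA : blkA d a σ j c ζ = ((1 - d.b τ : ℝ) : ℂ) * Complex.exp ((qA a j τ : ℂ) +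
      Complex.I * ((-(σ * (j * (j - 1))) * ζ.im + 0 * d.P γ : ℝ) : ℂ)) := by
    rw [blkA, mode, hτ, hγ]
  have vB : blkB d a σ j c ζ = (d.f τ : ℂ) * Complex.exp ((qB d a j τ : ℂ) +
      Complex.I * ((σ * (j * (j + 1)) * ζ.im + kB d σ j τ * d.P γ : ℝ) : ℂ)) := by
    rw [blkB, mode, hτ, hγ]
  rw [vA, vB]
  have nA : ‖Complex.exp ((qA a j τ : ℂ) +
      Complex.I * ((-(σ * (j * (j - 1))) * ζ.im + 0 * d.P γ : ℝ) : ℂ))‖ = rexp (qA a j τ) := by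
    rw [Complex.norm_exp]; simp
  have nB : ‖Complex.exp ((qB d a j τ : ℂ) +
      Complex.I * ((σ * (j * (j + 1)) * ζ.im + kB d σ j τ * d.P γ : ℝ) : ℂ))‖ = rexp (qB d a j τ) := by
    rw [Complex.norm_exp]; simp
  have lowU : 0 ≤ c' → -c' ≤ cos ((σ * (j * (j + 1)) * ζ.im + kB d σ j τ * d.P γ) -
      (-(σ * (j * (j - 1))) * ζ.im + 0 * d.P γ)) → _ :=
    fun h h2 => two_exp_lower (qA a j τ) (qB d a j τ) _ _ c' h hc'1 h2
  have hcosarg : (σ * (j * (j + 1)) * ζ.im + kB d σ j τ * d.P γ) -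
      (-(σ * (j * (j - 1))) * ζ.im + 0 * d.P γ) = σ * (γ + π - (3 / j) * (1 - d.η τ) * d.P γ) := by
    rw [kB, hγ]; ring
  rw [hcosarg] at lowU
  clear hcosarg lA lB vA vB hbd
  obtain ⟨eA, heA⟩ : ∃ eA, eA = Complex.exp ((qA a j τ : ℂ) +
      Complex.I * ((-(σ * (j * (j - 1))) * ζ.im + 0 * d.P γ : ℝ) : ℂ)) := ⟨_, rfl⟩
  obtain ⟨eB, heB⟩ : ∃ eB, eB = Complex.exp ((qB d a j τ : ℂ) +
      Complex.I * ((σ * (j * (j + 1)) * ζ.im + kB d σ j τ * d.P γ : ℝ) : ℂ)) := ⟨_, rfl⟩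
  rw [← heA, ← heB] at lowU ⊢
  rw [← heA] at nA
  rw [← heB] at nB
  have hCJ : 0 ≤ C * j ^ 3 := by positivity
  have up : ∀ x : ℝ, 0 ≤ x → C * j ^ 3 * x ≤ k * C * j ^ 3 * x := by
    intro x hx
    have : 0 ≤ C * j ^ 3 * x := by positivity
    nlinarith
  have h3j : 0 < 3 / j := by positivity
  obtain ⟨MA, hMA⟩ : ∃ MA, MA = modeLap (1 - d.b τ) (-d.b1 τ) (-d.b2 τ) (-((j + 5) / 2)) 0 0 0 0
    (d.P γ) (d.P1 γ) (d.P2 γ) j (-(σ * (j * (j - 1)))) := ⟨_, rfl⟩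
  obtain ⟨MB, hMB⟩ : ∃ MB, MB = modeLap (d.f τ) (d.f1 τ) (d.f2 τ)
      (-((j + 5) / 2) + 8 - (9 + 3 / j) * (d.η1 τ * τ + d.η τ))
      (-((9 + 3 / j) * (d.η2 τ * τ + 2 * d.η1 τ))) (kB d σ j τ) (σ * (3 / j) * d.η1 τ)
      (σ * (3 / j) * d.η2 τ) (d.P γ) (d.P1 γ) (d.P2 γ) j (σ * (j * (j + 1))) := ⟨_, rfl⟩
  rw [← hMA] at bA ⊢
  rw [← hMB] at bB ⊢
  obtain ⟨t1, t2⟩ := abs_le.1 hτ1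
  rcases le_total τ (-4/5) with c1 | c1
  · obtain ⟨f0, f10, f20⟩ := d.fl τ c1
    obtain ⟨b0, -, -⟩ := d.bl τ (by linarith)
    have hMB0 : MB = 0 := by rw [hMB, f0, f10, f20, modeLap]; simp
    rw [hMB0, f0, b0]
    rw [b0] at bA
    have := comb_est_one (eA := eA) bA
    have h2 := up ‖eA‖ (norm_nonneg _)
    simp only [sub_zero, Complex.ofReal_one, one_mul, Complex.ofReal_zero, zero_mul, add_zero] at this ⊢
    exact this.trans h2
  rcases le_total τ (-2/5) with c2 | c2
  · obtain ⟨b0, -, -⟩ := d.bl τ (by linarith)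
    obtain ⟨η0, -, -⟩ := d.ηl τ (by linarith)
    have hq : qB d a j τ = qA a j τ + 8 * τ := by rw [qB, qA, η0]; ring
    have := sum_dom (d.f01 τ) nA nB (exp_half (by rw [hq]; linarith))
    rw [b0] at bA ⊢
    refine comb_est bA bB nA nB hCJ ?_
    simp only [sub_zero, Complex.ofReal_one, one_mul]
    exact this.trans (by gcongr)
  obtain ⟨f0, f10, f20⟩ := d.fr τ c2
  rcases le_total τ (3/10) with c3 | c3
  · obtain ⟨b0, b10, b20⟩ := d.bl τ c3
    obtain ⟨η0, η10, η20⟩ := d.ηl τ (by linarith)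
    rcases d.Pc γ with ⟨P1, P2⟩ | hcos
    · have hMM : MA = MB := by
        have s2 : (σ : ℂ) ^ 2 = 1 := by exact_mod_cast hσ2
        have sj : (j : ℂ) ≠ 0 := by exact_mod_cast hjp.ne'
        rw [hMA, hMB, f0, f10, f20, b0, b10, b20, P1, P2, kB, η0, η10, η20]
        simp only [modeLap]
        push_cast
        have r1 : ((σ : ℂ) * (j * (j + 1)) + -(σ * (3 / j)) * (1 - 0) * (1 * (2 * j ^ 2))) ^ 2 =
          (j * (j + 1) - 6 * j) ^ 2 := by
          have : ((σ : ℂ) * (j * (j + 1)) + -(σ * (3 / j)) * (1 - 0) * (1 * (2 * j ^ 2))) =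
            σ * (j * (j + 1) - 6 * j) := by field_simp; ring
          rw [this, mul_pow, s2, one_mul]
        have r2 : (-((σ : ℂ) * (j * (j - 1))) + 0 * (1 * (2 * j ^ 2))) ^ 2 = (j * (j - 1)) ^ 2 := by
          calc _ = (σ : ℂ) ^ 2 * (j * (j - 1)) ^ 2 := by ring
            _ = _ := by rw [s2, one_mul]
        rw [r1, r2]
        ring
      have := comb_est_one (eA := eA + eB) bA
      have h2 := up ‖eA + eB‖ (norm_nonneg _)
      rw [← hMM, f0, b0]
      rw [b0] at this
      simp only [sub_zero, Complex.ofReal_one, one_mul] at this ⊢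
      rw [← mul_add]
      exact this.trans h2
    · have key : -c' ≤ cos (σ * (γ + π - (3 / j) * (1 - d.η τ) * d.P γ)) := by
        have e : cos (σ * (γ + π - (3 / j) * (1 - d.η τ) * d.P γ)) =
            - cos (γ - (3 / j) * d.P γ) := by
          rw [η0, ← cos_add_pi]
          rcases hσ with h | h
          · rw [h]; congr 1; ring
          · rw [h, ← cos_neg]; congr 1; ring
        rw [e]
        have h1 : |cos (γ - (3 / j) * d.P γ) - cos γ| ≤ |(γ - (3 / j) * d.P γ) - γ| :=
          abs_cos_sub_cos_le _ _
        have h2 : |(γ - (3 / j) * d.P γ) - γ| ≤ 3 / j * d.K := by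
          rw [show (γ - (3 / j) * d.P γ) - γ = -((3 / j) * d.P γ) by ring, abs_neg, abs_mul,
            abs_of_pos h3j]
          gcongr
          exact (d.PK γ).1
        have h3 : 3 / j * d.K ≤ (1 - d.c) / 2 := by
          rw [div_le_iff₀ (by linarith)] at hj0
          rw [div_mul_eq_mul_div, div_le_iff₀ hjp]
          linarith
        have := (abs_le.1 h1).2
        rw [hc']
        linarith
      have h2 := lowU hc'0 key
      refine comb_est bA bB nA nB hCJ ?_
      rw [f0, b0]
      simp only [sub_zero, Complex.ofReal_one, one_mul]
      have h3 : 0 ≤ k := by linarith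
      have h4 := mul_le_mul_of_nonneg_left h2 h3
      rw [← mul_assoc, hk1] at h4
      have h5 : 0 < rexp (qA a j τ) + rexp (qB d a j τ) := by positivity
      nlinarith
  rcases le_total τ (1/2) with c4 | c4
  · obtain ⟨η0, -, -⟩ := d.ηl τ (by linarith)
    have hq : qB d a j τ = qA a j τ + 8 * τ := by rw [qB, qA, η0]; ring
    have hbu : 0 ≤ 1 - d.b τ ∧ 1 - d.b τ ≤ 1 := ⟨by linarith [(d.b01 τ).2], by linarith [(d.b01 τ).1]⟩
    have := sum_dom hbu nB nA (exp_half (by rw [hq]; linarith))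
    refine comb_est bA bB nA nB hCJ ?_
    rw [f0]
    simp only [Complex.ofReal_one, one_mul]
    rw [add_comm, add_comm (_ * eA)]
    exact this.trans (by gcongr)
  · obtain ⟨b0, b10, b20⟩ := d.br τ c4
    have hMA0 : MA = 0 := by rw [hMA, b0, b10, b20, modeLap]; simp
    rw [hMA0, f0, b0]
    rw [f0] at bB
    have := comb_est_one (eA := eB) bB
    have h2 := up ‖eB‖ (norm_nonneg _)
    simp only [sub_self, Complex.ofReal_one, one_mul, Complex.ofReal_zero, zero_mul, zero_add] at this ⊢
    exact this.trans h2


def cc (m : ℕ) : ℝ := 2 * log (m + 1 / 2)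
def aa : ℕ → ℝ
  | 0 => 0
  | (i + 1) => aa i - ((i : ℝ) + 1) * (i + 6) / 2 * (cc (i + 1) - cc i)
def sg (m : ℕ) : ℝ := (-1) ^ m

theorem sg_cases (m : ℕ) : sg m = 1 ∨ sg m = -1 := neg_one_pow_eq_or ℝ m

theorem sg_succ (m : ℕ) : sg (m + 1) = - sg m := by rw [sg, sg, pow_succ]; ring

def blk (d : Dat) (m : ℕ) (z : ℂ) : ℂ :=
  blkA d (aa m) (sg m) m (cc m) z + blkB d (aa m) (sg m) m (cc m) z

theorem aa_le (m : ℕ) : aa m ≤ -(m : ℝ) ^ 2 / 4 := by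
  induction m with
  | zero => simp [aa]
  | succ i ih =>
    rw [aa]
    have hi : (0:ℝ) ≤ i := Nat.cast_nonneg i
    have h1 : 2 / ((i : ℝ) + 3 / 2) ≤ cc (i + 1) - cc i := by
      have h2 := one_sub_inv_le_log_of_pos (x := ((i : ℝ) + 3 / 2) / (i + 1 / 2)) (by positivity)
      rw [log_div (by positivity) (by positivity), inv_div] at h2
      have h3 : 1 - ((i : ℝ) + 1 / 2) / (i + 3 / 2) = 1 / (i + 3 / 2) := by field_simp; ring
      rw [h3] at h2
      rw [cc, cc]
      push_cast
      rw [show (i : ℝ) + 1 + 1 / 2 = i + 3 / 2 by ring]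
      have h4 : 2 / ((i : ℝ) + 3 / 2) = 2 * (1 / (i + 3 / 2)) := by ring
      rw [h4]; linarith
    have h5 : (2 * (i : ℝ) + 1) / 4 ≤ ((i : ℝ) + 1) * (i + 6) / 2 * (2 / ((i : ℝ) + 3 / 2)) := by
      rw [mul_div_assoc', le_div_iff₀ (by positivity)]
      nlinarith
    have h6 : ((i : ℝ) + 1) * (i + 6) / 2 * (2 / ((i : ℝ) + 3 / 2)) ≤
      ((i : ℝ) + 1) * (i + 6) / 2 * (cc (i + 1) - cc i) := by gcongr
    push_cast
    nlinarith

theorem log_t (s : ℝ) : s = 2 * log (rexp (s / 2)) := by rw [log_exp]; ring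

theorem tau_ge {m : ℕ} {s t k : ℝ} (ht : t = rexp (s / 2)) (h : k ≤ t) (hk : 0 < k) :
    2 * m * (1 - ((m : ℝ) + 1 / 2) / k) ≤ m * (s - cc m) := by
  have hm : (0:ℝ) ≤ m := Nat.cast_nonneg m
  have h2 := one_sub_inv_le_log_of_pos (x := k / ((m : ℝ) + 1 / 2)) (by positivity)
  rw [log_div hk.ne' (by positivity), inv_div] at h2
  have h3 : log k ≤ log t := log_le_log hk h
  rw [ht, log_exp] at h3
  rw [cc]
  nlinarith

theorem tau_le {m : ℕ} {s t k : ℝ} (ht : t = rexp (s / 2)) (h : t ≤ k) :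
    m * (s - cc m) ≤ 2 * m * (k / ((m : ℝ) + 1 / 2) - 1) := by
  have hm : (0:ℝ) ≤ m := Nat.cast_nonneg m
  have t0 : 0 < t := ht ▸ exp_pos _
  have hk : 0 < k := by linarith
  have h2 := log_le_sub_one_of_pos (x := k / ((m : ℝ) + 1 / 2)) (by positivity)
  rw [log_div hk.ne' (by positivity)] at h2
  have h3 : log t ≤ log k := log_le_log t0 h
  rw [ht, log_exp] at h3
  rw [cc]
  nlinarith

theorem blk_agree (d : Dat) {m : ℕ} (hm : 1 ≤ m) {z : ℂ} (h1 : 4 / 5 ≤ m * (z.re - cc m))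
    (h2 : ((m + 1 : ℕ) : ℝ) * (z.re - cc (m + 1)) ≤ -4 / 5) : blk d m z = blk d (m + 1) z := by
  have hm' : (m : ℝ) ≠ 0 := by positivity
  obtain ⟨b1, -, -⟩ := d.br (m * (z.re - cc m)) (by linarith)
  obtain ⟨f1, -, -⟩ := d.fr (m * (z.re - cc m)) (by linarith)
  obtain ⟨e1, -, -⟩ := d.ηr (m * (z.re - cc m)) h1
  obtain ⟨b2, -, -⟩ := d.bl (((m + 1 : ℕ) : ℝ) * (z.re - cc (m + 1))) (by linarith)
  obtain ⟨f2, -, -⟩ := d.fl (((m + 1 : ℕ) : ℝ) * (z.re - cc (m + 1))) h2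
  rw [blk, blk, blkA, blkB, blkA, blkB, mode, mode, mode, mode, b1, f1, b2, f2, kB, e1, qB, e1, sg_succ]
  simp only [sub_self, sub_zero, Complex.ofReal_zero, zero_mul, zero_add, Complex.ofReal_one, one_mul,
    add_zero, mul_zero]
  congr 1
  congr 1
  · simp only [qA]
    rw [aa]
    congr 1
    push_cast
    field_simp
    ring
  · congr 2
    push_cast
    ring

theorem overlap (d : Dat) {m : ℕ} (hm : 10 ≤ m) {z : ℂ} {t : ℝ} (ht : t = rexp (z.re / 2))
    (h1 : m + 19 / 20 ≤ t) (h2 : t ≤ m + 1) : blk d m z = blk d (m + 1) z := by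
  have hm' : (10:ℝ) ≤ m := by exact_mod_cast hm
  refine blk_agree d (by omega) ?_ ?_
  · refine le_trans ?_ (tau_ge ht h1 (by linarith))
    have : 1 - ((m:ℝ) + 1 / 2) / (m + 19 / 20) = (9 / 20) / (m + 19 / 20) := by field_simp; ring
    rw [this, mul_div_assoc', le_div_iff₀ (by linarith)]
    linarith
  · refine (tau_le (m := m + 1) ht h2).trans ?_
    push_cast
    have : ((m:ℝ) + 1) / (m + 1 + 1 / 2) - 1 = -(1 / 2) / (m + 1 + 1 / 2) := by field_simp; ring
    rw [this, mul_div_assoc', div_le_iff₀ (by linarith)]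
    linarith

theorem tau_abs {m : ℕ} (hm : 1 ≤ m) {s t : ℝ} (ht : t = rexp (s / 2))
    (h1 : m ≤ t) (h2 : t ≤ m + 1) : |m * (s - cc m)| ≤ 1 := by
  have hm' : (1:ℝ) ≤ m := by exact_mod_cast hm
  rw [abs_le]
  constructor
  · refine le_trans (le_of_eq ?_) (tau_ge ht h1 (by linarith))
    field_simp; ring
  · refine (tau_le ht h2).trans ?_
    have : ((m:ℝ) + 1) / (m + 1 / 2) - 1 = (1 / 2) / (m + 1 / 2) := by field_simp; ring
    rw [this, mul_div_assoc', div_le_iff₀ (by linarith)]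
    linarith

theorem exp_t {s t : ℝ} (ht : t = rexp (s / 2)) : rexp s = t ^ 2 ∧ rexp (2 * s) = t ^ 4 := by
  constructor
  · rw [ht, ← exp_nat_mul]; congr 1; push_cast; ring
  · rw [ht, ← exp_nat_mul]; congr 1; push_cast; ring

theorem blk_est (d : Dat) : ∃ C j0 : ℝ, 0 ≤ C ∧ ∀ (m : ℕ) (ζ : ℂ) (t : ℝ), j0 ≤ m → 1 ≤ m →
    t = rexp (ζ.re / 2) → m ≤ t → t ≤ m + 1 →
    ∃ L, HasLap (blk d m) L ζ ∧
      ‖L + 3 / 4 * (rexp (2 * ζ.re) : ℂ) * blk d m ζ‖ ≤ C * t ^ 3 * ‖blk d m ζ‖ := by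
  obtain ⟨C, j0, hC, h⟩ := block_est d
  refine ⟨C, j0, hC, ?_⟩
  intro m ζ t hj hm ht h1 h2
  have hm' : (1:ℝ) ≤ m := by exact_mod_cast hm
  obtain ⟨L, hL, hb⟩ := h (aa m) (sg m) m (cc m) ζ hj hm' (sg_cases m) (tau_abs hm ht h1 h2) (by
    rw [(exp_t ht).2]
    have a1 : (m:ℝ) ^ 4 ≤ t ^ 4 := by gcongr
    have t0 : 0 ≤ t := by linarith
    have a2 : t ^ 4 ≤ (m + 1 : ℝ) ^ 4 := by gcongr
    rw [abs_of_nonneg (by linarith)]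
    have a3 : (m:ℝ) ^ 2 ≤ m ^ 3 := by nlinarith [sq_nonneg (m:ℝ)]
    have a4 : (m:ℝ) ≤ m ^ 2 := by nlinarith
    nlinarith)
  refine ⟨L, hL, hb.trans ?_⟩
  rw [blk]
  gcongr

theorem blk_decay (d : Dat) {m : ℕ} (hm : 1 ≤ m) {ζ : ℂ} {t : ℝ} (ht : t = rexp (ζ.re / 2))
    (h1 : m ≤ t) (h2 : t ≤ m + 1) : ‖blk d m ζ‖ ≤ 2 * rexp (40 - t ^ 2 / 16) := by
  have hm' : (1:ℝ) ≤ m := by exact_mod_cast hm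
  have h3 := tau_abs hm ht h1 h2
  rw [blk, blkA, blkB]
  refine (norm_add_le _ _).trans ?_
  rw [mode_norm, mode_norm]
  set τ := (m:ℝ) * (ζ.re - cc m)
  obtain ⟨τ1, τ2⟩ := abs_le.1 h3
  have ha := aa_le m
  have t0 : 0 ≤ t := by linarith
  have ht2 : t ^ 2 ≤ (m + 1) ^ 2 := by gcongr
  have e1 : qA (aa m) m τ ≤ 20 - t ^ 2 / 16 := by
    rw [qA]
    nlinarith
  have e2 : qB d (aa m) m τ ≤ 40 - t ^ 2 / 16 := by
    have : qB d (aa m) m τ = qA (aa m) m τ + 8 * τ - (9 + 3 / m) * (d.η τ * τ) := rfl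
    rw [this]
    have h5 : |(9 + 3 / (m:ℝ)) * (d.η τ * τ)| ≤ 12 := by
      rw [abs_mul, abs_mul, abs_of_nonneg (d.η01 τ).1, abs_of_pos (by positivity)]
      have h6 : 3 / (m:ℝ) ≤ 3 := div_le_self (by norm_num) hm'
      have h7 : d.η τ * |τ| ≤ 1 := mul_le_one₀ (d.η01 τ).2 (abs_nonneg _) h3
      have h8 : 0 ≤ d.η τ * |τ| := mul_nonneg (d.η01 τ).1 (abs_nonneg _)
      have h9 : 0 ≤ 3 / (m:ℝ) := by positivity
      nlinarith
    have := (abs_le.1 h5).1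
    linarith
  have f1 : |1 - d.b τ| ≤ 1 := abs_le.2 ⟨by linarith [(d.b01 τ).2], by linarith [(d.b01 τ).1]⟩
  have f2 : |d.f τ| ≤ 1 := abs_le.2 ⟨by linarith [(d.f01 τ).1], (d.f01 τ).2⟩
  have g1 : rexp (qA (aa m) m τ) ≤ rexp (40 - t ^ 2 / 16) := exp_le_exp.2 (by linarith)
  have g2 : rexp (qB d (aa m) m τ) ≤ rexp (40 - t ^ 2 / 16) := exp_le_exp.2 e2
  have := mul_le_mul f1 g1 (exp_pos _).le zero_le_one
  have := mul_le_mul f2 g2 (exp_pos _).le zero_le_one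
  linarith

theorem mode_periodic {χ q κ P : ℝ → ℝ} (hP : Function.Periodic P (2 * π)) (j : ℕ) (c : ℝ) (n : ℝ)
    (N : ℤ) (hN : n = N) (ζ : ℂ) :
    mode χ q κ P j c n (ζ + 2 * π * Complex.I) = mode χ q κ P j c n ζ := by
  have e1 : (ζ + 2 * π * Complex.I).re = ζ.re := by simp
  have e2 : (ζ + 2 * π * Complex.I).im = ζ.im + 2 * π := by simp
  rw [mode, mode, e1, e2]
  have e3 : P (2 * (j:ℝ) ^ 2 * (ζ.im + 2 * π) - π) = P (2 * (j:ℝ) ^ 2 * ζ.im - π) := by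
    have := hP.nat_mul (2 * j ^ 2) (2 * (j:ℝ) ^ 2 * ζ.im - π)
    rw [← this]
    congr 1; push_cast; ring
  rw [e3]
  congr 1
  set Q := κ (j * (ζ.re - c)) * P (2 * (j:ℝ) ^ 2 * ζ.im - π)
  rw [show ((q (j * (ζ.re - c)) : ℝ) : ℂ) + Complex.I * ((n * (ζ.im + 2 * π) + Q : ℝ) : ℂ) =
    (((q (j * (ζ.re - c)) : ℝ) : ℂ) + Complex.I * ((n * ζ.im + Q : ℝ) : ℂ)) + N * (2 * π * Complex.I) by
      rw [hN]; push_cast; ring]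
  exact Complex.exp_periodic.int_mul N _

theorem blk_periodic (d : Dat) (m : ℕ) (ζ : ℂ) : blk d m (ζ + 2 * π * Complex.I) = blk d m ζ := by
  rw [blk, blk, blkA, blkB, mode_periodic d.Pper m _ _ (-((-1) ^ m * (m * (m - 1)))) (by rw [sg]; push_cast; ring),
    mode_periodic d.Pper m _ _ ((-1) ^ m * (m * (m + 1))) (by rw [sg]; push_cast; ring)]


theorem exists_starter (d : Dat) (J : ℕ) (hJ : 10 ≤ J) (hev : Even J) : ∃ S : ℂ → ℂ,
    (∀ ζ, S (ζ + 2 * π * Complex.I) = S ζ) ∧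
    (∀ ζ : ℂ, J - 1 / 20 ≤ rexp (ζ.re / 2) → rexp (ζ.re / 2) ≤ J → S ζ = blk d J ζ) ∧
    (∃ C : ℝ, 0 ≤ C ∧ ∀ ζ : ℂ, rexp (ζ.re / 2) ≤ J → ∃ L, HasLap S L ζ ∧
      ‖L + 3 / 4 * (rexp (2 * ζ.re) : ℂ) * S ζ‖ ≤ C * rexp (2 * ζ.re) * ‖S ζ‖) ∧
    (∃ M : ℝ, 0 ≤ M ∧ ∀ ζ : ℂ, rexp (ζ.re / 2) ≤ J → ‖S ζ‖ ≤ M) ∧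
    (∃ K : ℂ, K ≠ 0 ∧ ∃ ρ : ℝ, 0 < ρ ∧ ∀ ζ : ℂ, rexp ζ.re < ρ →
      S ζ = K * (starRingEnd ℂ) (Complex.exp ζ) ^ (J * (J - 1))) := by
  obtain ⟨ξ, ξ1, ξ2, hξ, ξ01, ξl, ξr, -⟩ := exists_cut (-2) (-3/2) (by norm_num)
  have hJ' : (10:ℝ) ≤ J := by exact_mod_cast hJ
  obtain ⟨B, hB⟩ : ∃ B : ℝ, B = (J - 1) + (J + 5) / 2 := ⟨_, rfl⟩
  obtain ⟨q, hq⟩ : ∃ q : ℝ → ℝ, q = fun τ => aa J + (J - 1) * τ - B * (ξ τ * τ) := ⟨_, rfl⟩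
  obtain ⟨q1, hq1⟩ : ∃ q1 : ℝ → ℝ, q1 = fun τ => ((J:ℝ) - 1) - B * (ξ1 τ * τ + ξ τ) := ⟨_, rfl⟩
  obtain ⟨q2, hq2⟩ : ∃ q2 : ℝ → ℝ, q2 = fun τ => -(B * (ξ2 τ * τ + 2 * ξ1 τ)) := ⟨_, rfl⟩
  have Dq : D2 q q1 q2 := by
    rw [hq, hq1, hq2]
    refine ⟨?_, fun x => ?_, fun x => ?_⟩
    · have := hξ.1
      fun_prop
    · have := (((hasDerivAt_id x).const_mul ((J:ℝ) - 1)).const_add (aa J)).sub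
        (((hξ.2.1 x).mul (hasDerivAt_id x)).const_mul B)
      refine HasDerivAt.congr_deriv this ?_
      simp only [id]
      ring
    · have := ((((hξ.2.2 x).mul (hasDerivAt_id x)).add (hξ.2.1 x)).const_mul B).const_sub ((J:ℝ) - 1)
      refine HasDerivAt.congr_deriv this ?_
      simp only [id]
      ring
  have D1 : D2 (fun _ => (1:ℝ)) (fun _ => 0) (fun _ => 0) :=
    ⟨contDiff_const, fun x => hasDerivAt_const _ _, fun x => hasDerivAt_const _ _⟩
  have hsg : sg J = 1 := by rw [sg, hev.neg_one_pow]
  have hn : -(sg J * ((J:ℝ) * (J - 1))) = -((J:ℝ) * (J - 1)) := by rw [hsg, one_mul]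
  refine ⟨mode (fun _ => 1) q (fun _ => 0) d.P J (cc J) (-((J:ℝ) * (J - 1))), ?_, ?_, ?_, ?_, ?_⟩
  · intro ζ
    exact mode_periodic d.Pper J _ _ (-((J:ℤ) * (J - 1))) (by push_cast; ring) ζ
  · intro ζ h1 h2
    obtain ⟨τ, hτ⟩ : ∃ τ, τ = (J:ℝ) * (ζ.re - cc J) := ⟨_, rfl⟩
    have t1 : -3/2 ≤ τ := by
      rw [hτ]
      refine le_trans ?_ (tau_ge rfl h1 (by linarith))
      have : 1 - ((J:ℝ) + 1 / 2) / (J - 1 / 20) = -(11 / 20) / (J - 1 / 20) := by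
        have h0 : (J:ℝ) - 1 / 20 ≠ 0 := by linarith
        rw [eq_div_iff h0, sub_mul, div_mul_cancel₀ _ h0]
        ring
      rw [this, mul_div_assoc', le_div_iff₀ (by linarith)]
      linarith
    have t2 : τ ≤ -4/5 := by
      rw [hτ]
      refine (tau_le rfl h2).trans ?_
      have : (J:ℝ) / (J + 1 / 2) - 1 = -(1 / 2) / (J + 1 / 2) := by field_simp; ring
      rw [this, mul_div_assoc', div_le_iff₀ (by linarith)]
      linarith
    obtain ⟨b2, -, -⟩ := d.bl τ (by linarith)
    obtain ⟨f2, -, -⟩ := d.fl τ t2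
    obtain ⟨x1, -, -⟩ := ξr τ t1
    rw [blk, blkA, blkB, hn]
    simp only [mode]
    rw [← hτ, f2, b2, hq]
    simp only [qA, x1, hB]
    simp only [sub_zero, Complex.ofReal_zero, zero_mul, add_zero]
    congr 3
    push_cast
    ring
  · have hcont : Continuous fun τ : ℝ => (J:ℝ) ^ 2 * (q2 τ + q1 τ ^ 2) - ((J:ℝ) * (J - 1)) ^ 2 := by
      have c1 := Dq.cont1
      have c2 := Dq.cont2
      fun_prop
    obtain ⟨M, hM⟩ := (isCompact_Icc (a := (-2:ℝ)) (b := 0)).exists_bound_of_continuousOn hcont.continuousOn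
    obtain ⟨δ, hδ⟩ : ∃ δ, δ = rexp (2 * (cc J - 2 / J)) := ⟨_, rfl⟩
    have δ0 : 0 < δ := hδ ▸ exp_pos _
    have M0 : 0 ≤ M := (norm_nonneg _).trans (hM 0 ⟨by norm_num, le_rfl⟩)
    refine ⟨M / δ + 3 / 4, by positivity, ?_⟩
    intro ζ h2
    obtain ⟨τ, hτ⟩ : ∃ τ, τ = (J:ℝ) * (ζ.re - cc J) := ⟨_, rfl⟩
    refine ⟨_, mode_hasLap J (cc J) (-((J:ℝ) * (J - 1))) D1 Dq D2_zero d.hP ζ hτ rfl, ?_⟩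
    have t2 : τ ≤ 0 := by
      rw [hτ]
      refine (tau_le rfl h2).trans ?_
      have : (J:ℝ) / (J + 1 / 2) - 1 = -(1 / 2) / (J + 1 / 2) := by field_simp; ring
      rw [this, mul_div_assoc', div_le_iff₀ (by linarith)]
      linarith
    have vS : mode (fun _ => 1) q (fun _ => 0) d.P J (cc J) (-((J:ℝ) * (J - 1))) ζ =
      Complex.exp ((q τ : ℂ) + Complex.I * ((-((J:ℝ) * (J - 1)) * ζ.im +
        0 * d.P (2 * (J:ℝ) ^ 2 * ζ.im - π) : ℝ) : ℂ)) := by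
      rw [mode, hτ]; simp only [Complex.ofReal_one, one_mul]
    rw [vS]
    set e := Complex.exp ((q τ : ℂ) + Complex.I * ((-((J:ℝ) * (J - 1)) * ζ.im +
        0 * d.P (2 * (J:ℝ) ^ 2 * ζ.im - π) : ℝ) : ℂ))
    have hl : ∀ p p1 p2 : ℝ, modeLap 1 0 0 (q1 τ) (q2 τ) 0 0 0 p p1 p2 J (-((J:ℝ) * (J - 1))) =
        (((J:ℝ) ^ 2 * (q2 τ + q1 τ ^ 2) - ((J:ℝ) * (J - 1)) ^ 2 : ℝ) : ℂ) := by
      intro p p1 p2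
      rw [modeLap]; push_cast; ring
    rw [hl, ← add_mul, norm_mul]
    have E0 := exp_pos (2 * ζ.re)
    gcongr
    have hmain : |(J:ℝ) ^ 2 * (q2 τ + q1 τ ^ 2) - ((J:ℝ) * (J - 1)) ^ 2| ≤ M / δ * rexp (2 * ζ.re) := by
      rcases le_total τ (-2) with h | h
      · obtain ⟨x0, x1, x2⟩ := ξl τ h
        have : (J:ℝ) ^ 2 * (q2 τ + q1 τ ^ 2) - ((J:ℝ) * (J - 1)) ^ 2 = 0 := by
          rw [hq1, hq2]; simp only [x0, x1, x2]; ring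
        rw [this, abs_zero]
        positivity
      · refine (hM τ ⟨h, t2⟩).trans ?_
        have : δ ≤ rexp (2 * ζ.re) := by
          rw [hδ, exp_le_exp]
          have : -2 / (J:ℝ) ≤ ζ.re - cc J := by
            rw [div_le_iff₀ (by linarith)]; rw [hτ] at h; linarith
          have h3 : -2 / (J:ℝ) = - (2 / J) := by ring
          linarith
        rw [div_mul_eq_mul_div, le_div_iff₀ δ0]
        gcongr
    have e1 : (((J:ℝ) ^ 2 * (q2 τ + q1 τ ^ 2) - ((J:ℝ) * (J - 1)) ^ 2 : ℝ) : ℂ) +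
        3 / 4 * (rexp (2 * ζ.re) : ℂ) = (((J:ℝ) ^ 2 * (q2 τ + q1 τ ^ 2) - ((J:ℝ) * (J - 1)) ^ 2 +
          3 / 4 * rexp (2 * ζ.re) : ℝ) : ℂ) := by push_cast; ring
    rw [e1, Complex.norm_real, Real.norm_eq_abs]
    refine (abs_add_le _ _).trans ?_
    rw [abs_of_pos (by positivity : 0 < 3 / 4 * rexp (2 * ζ.re)), add_mul]
    linarith
  · refine ⟨rexp (aa J + (J + 5)), (exp_pos _).le, ?_⟩
    intro ζ h2
    have t2 : (J:ℝ) * (ζ.re - cc J) ≤ 0 := by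
      refine (tau_le rfl h2).trans ?_
      have : (J:ℝ) / (J + 1 / 2) - 1 = -(1 / 2) / (J + 1 / 2) := by field_simp; ring
      rw [this, mul_div_assoc', div_le_iff₀ (by linarith)]
      linarith
    rw [mode_norm, abs_one, one_mul, exp_le_exp, hq]
    set τ := (J:ℝ) * (ζ.re - cc J)
    simp only
    rcases le_total τ (-2) with h | h
    · rw [(ξl τ h).1]
      nlinarith
    · have h5 : B * (ξ τ * τ) = ξ τ * ((J - 1) * τ) + ξ τ * ((J + 5) / 2 * τ) := by rw [hB]; ring
      rw [h5]
      have h6 : (1 - ξ τ) * ((J - 1) * τ) ≤ 0 :=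
        mul_nonpos_of_nonneg_of_nonpos (by linarith [(ξ01 τ).2])
          (mul_nonpos_of_nonneg_of_nonpos (by linarith) t2)
      have h7 : ξ τ * (-τ) ≤ 2 := by nlinarith [ξ01 τ, (ξ01 τ).1, (ξ01 τ).2]
      nlinarith
  · refine ⟨(rexp (aa J - J * (J - 1) * cc J) : ℂ), by exact_mod_cast (exp_pos _).ne', rexp (cc J - 2 / J),
      exp_pos _, ?_⟩
    intro ζ h
    rw [exp_lt_exp] at h
    have t2 : (J:ℝ) * (ζ.re - cc J) ≤ -2 := by
      have : ζ.re - cc J ≤ -2 / J := by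
        have h3 : -2 / (J:ℝ) = - (2 / J) := by ring
        linarith
      rw [le_div_iff₀ (by linarith)] at this
      linarith
    obtain ⟨x0, -, -⟩ := ξl _ t2
    simp only [mode]
    rw [hq, ← Complex.exp_conj, ← Complex.exp_nat_mul, Complex.ofReal_exp, ← Complex.exp_add]
    simp only [x0]
    rw [Complex.ofReal_one, one_mul]
    congr 1
    have hc : (starRingEnd ℂ) ζ = ζ.re - ζ.im * Complex.I := by
      apply Complex.ext <;> simp
    have hJ1 : ((J * (J - 1) : ℕ) : ℂ) = J * (J - 1) := by
      rw [Nat.cast_mul, Nat.cast_sub (by omega)]; simp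
    rw [hc, hJ1]
    push_cast
    ring


theorem exists_G : ∃ G : ℂ → ℂ, (∀ ζ, G (ζ + 2 * π * Complex.I) = G ζ) ∧
    (∃ C : ℝ, 0 ≤ C ∧ ∀ ζ : ℂ, ∃ L, HasLap G L ζ ∧
      ‖L + 3 / 4 * (rexp (2 * ζ.re) : ℂ) * G ζ‖ ≤ C * rexp (2 * ζ.re) * ‖G ζ‖ ∧
      ‖L + 3 / 4 * (rexp (2 * ζ.re) : ℂ) * G ζ‖ ≤ C * rexp (ζ.re / 2) ^ 3 * ‖G ζ‖) ∧
    (∃ M : ℝ, 0 ≤ M ∧ ∀ ζ : ℂ, ‖G ζ‖ ≤ M * rexp (-(1 / 16 * rexp ζ.re))) ∧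
    (∃ K : ℂ, K ≠ 0 ∧ ∃ n : ℕ, 3 ≤ n ∧ ∃ ρ : ℝ, 0 < ρ ∧ ∀ ζ : ℂ, rexp ζ.re < ρ →
      G ζ = K * (starRingEnd ℂ) (Complex.exp ζ) ^ n) := by
  obtain ⟨d⟩ := exists_Dat
  obtain ⟨Cb, j0, hCb, hb⟩ := blk_est d
  obtain ⟨J, hJ10, hJ0, hev⟩ : ∃ J : ℕ, 10 ≤ J ∧ j0 ≤ J ∧ Even J := by
    obtain ⟨k, hk⟩ := exists_nat_ge j0
    refine ⟨2 * (k + 5), by omega, ?_, even_two_mul _⟩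
    push_cast
    have : (0:ℝ) ≤ k := Nat.cast_nonneg k
    linarith
  obtain ⟨S, Sper, Sagree, ⟨Cs, hCs, hS⟩, ⟨Ms, hMs0, hMs⟩, K, hK, ρ, hρ, hSK⟩ := exists_starter d J hJ10 hev
  have hJ' : (10:ℝ) ≤ J := by exact_mod_cast hJ10
  classical
  obtain ⟨G, hG⟩ : ∃ G : ℂ → ℂ, G = fun ζ => if rexp (ζ.re / 2) < J then S ζ else
    blk d ⌊rexp (ζ.re / 2)⌋₊ ζ := ⟨_, rfl⟩
  have Glt : ∀ ζ : ℂ, rexp (ζ.re / 2) < J → G ζ = S ζ := fun ζ h => by rw [hG]; simp only [if_pos h]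
  have Gge : ∀ (ζ : ℂ) (m : ℕ), J ≤ m → (m : ℝ) - 1 / 20 < rexp (ζ.re / 2) → rexp (ζ.re / 2) < m + 1 →
      G ζ = blk d m ζ := by
    intro ζ m hm h1 h2
    have hmJ : (J:ℝ) ≤ m := by exact_mod_cast hm
    rcases le_or_gt (m:ℝ) (rexp (ζ.re / 2)) with h | h
    · rw [hG]
      simp only
      rw [if_neg (by linarith), (Nat.floor_eq_iff (exp_pos _).le).2 ⟨h, h2⟩]
    · rcases hm.eq_or_lt with e | e
      · subst e
        rw [Glt ζ h, Sagree ζ h1.le h.le]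
      · obtain ⟨k, rfl⟩ : ∃ k, m = k + 1 := ⟨m - 1, by omega⟩
        have hk : J ≤ k := by omega
        have hkJ : (J:ℝ) ≤ k := by exact_mod_cast hk
        push_cast at h1 h h2
        rw [← overlap d (by omega : 10 ≤ k) rfl (by linarith) h.le, hG]
        simp only
        rw [if_neg (by linarith), (Nat.floor_eq_iff (exp_pos _).le).2 ⟨by linarith, h⟩]
  have tcont : Continuous fun ζ : ℂ => rexp (ζ.re / 2) := by fun_prop
  refine ⟨G, ?_, ?_, ?_, ?_⟩
  · intro ζ
    have e1 : (ζ + 2 * π * Complex.I).re = ζ.re := by simp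
    rw [hG]
    simp only [e1, Sper, blk_periodic]
  · refine ⟨Cb + Cs * J + Cs, by positivity, ?_⟩
    intro ζ
    obtain ⟨t, ht⟩ : ∃ t, t = rexp (ζ.re / 2) := ⟨_, rfl⟩
    have t0 : 0 < t := ht ▸ exp_pos _
    have hE : rexp (2 * ζ.re) = t ^ 4 := (exp_t ht).2
    rcases lt_or_ge t J with h | h
    · obtain ⟨L, hL, hb⟩ := hS ζ (ht ▸ h.le)
      have ev : G =ᶠ[nhds ζ] S := by
        filter_upwards [tcont.continuousAt.eventually_lt continuousAt_const (ht ▸ h)] with z hz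
        exact Glt z hz
      refine ⟨L, hL.congr ev, ?_⟩
      rw [Glt ζ (ht ▸ h), hE, ← ht] at *
      constructor
      · refine hb.trans ?_
        gcongr
        have : 0 ≤ Cs * J := by positivity
        linarith
      · refine hb.trans (mul_le_mul_of_nonneg_right ?_ (norm_nonneg _))
        calc Cs * t ^ 4 = Cs * t * t ^ 3 := by ring
          _ ≤ Cs * J * t ^ 3 := by gcongr
          _ ≤ (Cb + Cs * J + Cs) * t ^ 3 := mul_le_mul_of_nonneg_right (by linarith) (by positivity)
    · obtain ⟨m, hm⟩ : ∃ m, m = ⌊t⌋₊ := ⟨_, rfl⟩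
      have h1 : (m:ℝ) ≤ t := hm ▸ Nat.floor_le t0.le
      have h2 : t < m + 1 := hm ▸ Nat.lt_floor_add_one t
      have hJm : J ≤ m := by rw [hm]; exact Nat.le_floor h
      have hJm' : (J:ℝ) ≤ m := by exact_mod_cast hJm
      obtain ⟨L, hL, hb⟩ := hb m ζ t (hJ0.trans hJm') (by omega) ht h1 h2.le
      have ev : G =ᶠ[nhds ζ] blk d m := by
        have u1 : (m:ℝ) - 1 / 20 < rexp (ζ.re / 2) := by rw [← ht]; linarith
        have u2 : rexp (ζ.re / 2) < (m:ℝ) + 1 := by rw [← ht]; linarith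
        filter_upwards [tcont.continuousAt.eventually_lt continuousAt_const u2,
          continuousAt_const.eventually_lt tcont.continuousAt u1] with z hz hz'
        exact Gge z m hJm hz' hz
      refine ⟨L, hL.congr ev, ?_⟩
      rw [ev.eq_of_nhds, ← ht]
      have p0 : 0 ≤ Cs * J := by positivity
      have p1 : 1 ≤ t := by linarith
      constructor
      · refine hb.trans ?_
        rw [hE]
        have : t ^ 3 ≤ t ^ 4 := pow_le_pow_right₀ p1 (by norm_num)
        gcongr
        linarith
      · refine hb.trans ?_
        gcongr
        linarith
  · refine ⟨Ms * rexp ((J:ℝ) ^ 2 / 16) + 2 * rexp 40, by positivity, ?_⟩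
    intro ζ
    obtain ⟨t, ht⟩ : ∃ t, t = rexp (ζ.re / 2) := ⟨_, rfl⟩
    have t0 : 0 < t := ht ▸ exp_pos _
    have hE : rexp ζ.re = t ^ 2 := (exp_t ht).1
    rw [hE, add_mul]
    have z1 : 0 ≤ Ms * rexp ((J:ℝ) ^ 2 / 16) * rexp (-(1 / 16 * t ^ 2)) := by positivity
    have z2 : 0 ≤ 2 * rexp 40 * rexp (-(1 / 16 * t ^ 2)) := by positivity
    rcases lt_or_ge t J with h | h
    · rw [Glt ζ (ht ▸ h)]
      have h1 := hMs ζ (ht ▸ h.le)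
      have h2 : 1 ≤ rexp ((J:ℝ) ^ 2 / 16) * rexp (-(1 / 16 * t ^ 2)) := by
        rw [← exp_add]
        apply one_le_exp
        have : t ^ 2 ≤ (J:ℝ) ^ 2 := by gcongr
        linarith
      have h3 := mul_le_mul_of_nonneg_left h2 hMs0
      rw [mul_one, ← mul_assoc] at h3
      linarith
    · obtain ⟨m, hm⟩ : ∃ m, m = ⌊t⌋₊ := ⟨_, rfl⟩
      have h1 : (m:ℝ) ≤ t := hm ▸ Nat.floor_le t0.le
      have h2 : t < m + 1 := hm ▸ Nat.lt_floor_add_one t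
      have hJm : J ≤ m := by rw [hm]; exact Nat.le_floor h
      rw [Gge ζ m hJm (by rw [← ht]; linarith) (by rw [← ht]; exact h2)]
      refine (blk_decay d (by omega) ht h1 h2.le).trans ?_
      have : rexp (40 - t ^ 2 / 16) = rexp 40 * rexp (-(1 / 16 * t ^ 2)) := by
        rw [← exp_add]; congr 1; ring
      rw [this, ← mul_assoc]
      linarith
  · refine ⟨K, hK, J * (J - 1), ?_, min ρ 1, by positivity, ?_⟩
    · have : 10 * 9 ≤ J * (J - 1) := Nat.mul_le_mul hJ10 (by omega)
      omega
    · intro ζ h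
      rw [Glt ζ, hSK ζ (h.trans_le (min_le_left _ _))]
      have h1 : rexp ζ.re < 1 := h.trans_le (min_le_right _ _)
      have h2 : ζ.re < 0 := by rwa [exp_lt_one_iff] at h1
      have : rexp (ζ.re / 2) ≤ 1 := by rw [exp_le_one_iff]; linarith
      linarith


theorem stmt2_aux (lam : ℝ) (hlam : 0 < lam) :
    ∃ (C c : ℝ) (V u : EuclideanSpace ℝ (Fin 2) → ℂ),
      0 < C ∧ 0 < c ∧ u ≠ 0 ∧ ContDiff ℝ 2 u ∧
      (∀ x, lap u x + (lam : ℂ) * u x = V x * u x) ∧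
      (∀ x, ‖V x‖ ≤ C * Real.sqrt (1 + ‖x‖ ^ 2) ^ (-(1 / 2 : ℝ))) ∧
      (∀ x, ‖u x‖ ≤ C * Real.exp (-(c * ‖x‖))) := by
  classical
  obtain ⟨G, Gper, ⟨C, hC, hG⟩, ⟨M, hM0, hM⟩, K, hK, n, hn, ρ, hρ, hGK⟩ := exists_G
  obtain ⟨μ, hμd⟩ : ∃ μ, μ = √(4 * lam / 3) := ⟨_, rfl⟩
  have hμ : 0 < μ := by rw [hμd]; positivity
  have hμ2 : lam = 3 / 4 * μ ^ 2 := by rw [hμd, sq_sqrt (by positivity)]; ring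
  have Gexp : ∀ ζ ζ', Complex.exp ζ = Complex.exp ζ' → G ζ = G ζ' := by
    intro ζ ζ' h
    obtain ⟨k, hk⟩ := Complex.exp_eq_exp_iff_exists_int.1 h
    rw [hk]
    have : Function.Periodic G (2 * π * Complex.I) := Gper
    exact this.int_mul k ζ'
  have Znz : ∀ x : EuclideanSpace ℝ (Fin 2), x ≠ 0 → ZL μ x ≠ 0 := by
    intro x hx
    have hn : 0 < ‖x‖ := norm_pos_iff.2 hx
    rw [← norm_pos_iff, ZL_norm hμ]; positivity
  have logre : ∀ x : EuclideanSpace ℝ (Fin 2), x ≠ 0 →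
      rexp (Complex.log (ZL μ x)).re = μ * ‖x‖ := by
    intro x hx
    have hn : 0 < ‖x‖ := norm_pos_iff.2 hx
    rw [Complex.log_re, ZL_norm hμ, exp_log (by positivity)]
  obtain ⟨u, hu⟩ : ∃ u : EuclideanSpace ℝ (Fin 2) → ℂ, u = fun x => if x = 0 then 0 else
    G (Complex.log (ZL μ x)) := ⟨_, rfl⟩
  have unz : ∀ x, x ≠ 0 → u x = G (Complex.log (ZL μ x)) := fun x hx => by rw [hu]; simp only [if_neg hx]
  have u0 : u 0 = 0 := by rw [hu]; simp
  have usmall : ∀ x, μ * ‖x‖ < ρ → u x = K * (starRingEnd ℂ) (ZL μ x) ^ n := by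
    intro x hx
    by_cases h : x = 0
    · rw [h, u0, map_zero, map_zero, zero_pow (by omega), mul_zero]
    · rw [unz x h, hGK _ (by rw [logre x h]; exact hx), Complex.exp_log (Znz x h)]
  have ev0 : u =ᶠ[nhds 0] fun x => K * (starRingEnd ℂ) (ZL μ x) ^ n := by
    have hc : ContinuousAt (fun x : EuclideanSpace ℝ (Fin 2) => μ * ‖x‖) 0 := by fun_prop
    filter_upwards [hc.eventually_lt continuousAt_const (by simpa using hρ)] with x hx
    exact usmall x hx
  have hlog : ∀ x, x ≠ 0 → ∀ L, HasLap G L (Complex.log (ZL μ x)) →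
      ContDiffAt ℝ 2 u x ∧ lap u x = L / (‖x‖ ^ 2 : ℝ) := by
    intro x hx L hL
    refine lap_log hμ hx hL rfl ?_
    filter_upwards [isOpen_ne.mem_nhds hx] with y hy
    rw [unz y hy]
    apply Gexp
    rw [Complex.exp_add, Complex.exp_log (Znz y hy), Complex.exp_log (Znz x hx),
      Complex.exp_log (div_ne_zero (Znz y hy) (Znz x hx)), div_mul_cancel₀ _ (Znz x hx)]
  have smooth : ContDiff ℝ 2 u := by
    rw [contDiff_iff_contDiffAt]
    intro x
    by_cases h : x = 0
    · rw [h]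
      refine ContDiffAt.congr_of_eventuallyEq ?_ ev0
      have h1 : ContDiff ℝ 2 fun x => (Complex.conjCLE : ℂ →L[ℝ] ℂ) (ZL μ x) :=
        (Complex.conjCLE : ℂ →L[ℝ] ℂ).contDiff.comp (ZL μ).contDiff
      exact (contDiff_const.mul (h1.pow n)).contDiffAt
    · obtain ⟨L, hL, -⟩ := hG (Complex.log (ZL μ x))
      exact (hlog x h L hL).1
  have lap0 : lap u 0 = 0 := by rw [lap_congr ev0, lap_zero_pow hn]
  have est : ∀ x, ‖lap u x + (lam : ℂ) * u x‖ * √(√(1 + ‖x‖ ^ 2)) ≤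
      C * μ ^ 2 * (2 + √(2 / μ)) * ‖u x‖ := by
    intro x
    by_cases h : x = 0
    · rw [h, lap0, u0]; simp
    · obtain ⟨L, hL, e1, e2⟩ := hG (Complex.log (ZL μ x))
      have r0 : 0 < ‖x‖ := norm_pos_iff.2 h
      obtain ⟨t, ht⟩ : ∃ t, t = rexp ((Complex.log (ZL μ x)).re / 2) := ⟨_, rfl⟩
      have t0 : 0 < t := ht ▸ exp_pos _
      have t2 : t ^ 2 = μ * ‖x‖ := by rw [← (exp_t ht).1, logre x h]
      have t4 : rexp (2 * (Complex.log (ZL μ x)).re) = (μ * ‖x‖) ^ 2 := by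
        rw [(exp_t ht).2, ← t2]; ring
      rw [← unz x h, t4] at e1 e2
      rw [← ht] at e2
      have id1 : lap u x + (lam : ℂ) * u x =
          (L + 3 / 4 * (((μ * ‖x‖) ^ 2 : ℝ) : ℂ) * u x) / (‖x‖ ^ 2 : ℝ) := by
        rw [(hlog x h L hL).2, hμ2]
        have : ((‖x‖ : ℝ) : ℂ) ≠ 0 := by exact_mod_cast r0.ne'
        push_cast
        field_simp
      have nid : ‖lap u x + (lam : ℂ) * u x‖ * ‖x‖ ^ 2 =
          ‖L + 3 / 4 * (((μ * ‖x‖) ^ 2 : ℝ) : ℂ) * u x‖ := by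
        rw [id1, norm_div, Complex.norm_real, Real.norm_of_nonneg (by positivity)]
        field_simp
      rw [← nid] at e1 e2
      have x2 : 0 < ‖x‖ ^ 2 := by positivity
      have f1 : ‖lap u x + (lam : ℂ) * u x‖ ≤ C * μ ^ 2 * ‖u x‖ := by
        refine le_of_mul_le_mul_right (e1.trans (le_of_eq ?_)) x2
        ring
      have f2 : ‖lap u x + (lam : ℂ) * u x‖ * t ≤ C * μ ^ 2 * ‖u x‖ := by
        refine le_of_mul_le_mul_right (le_trans (le_of_eq ?_)
          ((mul_le_mul_of_nonneg_right e2 t0.le).trans (le_of_eq ?_))) x2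
        · ring
        · calc C * t ^ 3 * ‖u x‖ * t = C * (t ^ 2) ^ 2 * ‖u x‖ := by ring
            _ = _ := by rw [t2]; ring
      have s0 : 0 ≤ √(2 / μ) := sqrt_nonneg _
      have B0 : 0 ≤ C * μ ^ 2 * ‖u x‖ := by positivity
      have N0 := norm_nonneg (lap u x + (lam : ℂ) * u x)
      rcases le_total ‖x‖ 1 with hx1 | hx1
      · have hX : √(√(1 + ‖x‖ ^ 2)) ≤ 2 := by
          rw [sqrt_le_left (by norm_num), sqrt_le_left (by norm_num)]
          nlinarith
        calc _ ≤ C * μ ^ 2 * ‖u x‖ * 2 := mul_le_mul f1 hX (sqrt_nonneg _) B0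
          _ ≤ _ := by nlinarith [mul_nonneg B0 s0]
      · have hX : √(√(1 + ‖x‖ ^ 2)) ≤ √(2 / μ) * t := by
          have h1 : √(2 / μ) * t = √(2 * ‖x‖) := by
            rw [← sqrt_sq t0.le, ← sqrt_mul (by positivity), t2]
            congr 1
            field_simp
          rw [h1]
          apply sqrt_le_sqrt
          rw [sqrt_le_left (by positivity)]
          nlinarith
        calc _ ≤ ‖lap u x + (lam : ℂ) * u x‖ * (√(2 / μ) * t) := by gcongr
          _ = (‖lap u x + (lam : ℂ) * u x‖ * t) * √(2 / μ) := by ring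
          _ ≤ (C * μ ^ 2 * ‖u x‖) * √(2 / μ) := by gcongr
          _ ≤ _ := by nlinarith
  obtain ⟨B, hB⟩ : ∃ B, B = C * μ ^ 2 * (2 + √(2 / μ)) := ⟨_, rfl⟩
  have hB0 : 0 ≤ B := by rw [hB]; positivity
  rw [← hB] at est
  have Xpos : ∀ x : EuclideanSpace ℝ (Fin 2), 0 < √(√(1 + ‖x‖ ^ 2)) := fun x => by positivity
  refine ⟨B + M + 1, 1 / 16 * μ, fun x => (lap u x + (lam : ℂ) * u x) / u x, u, by positivity,
    by positivity, ?_, smooth, ?_, ?_, ?_⟩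
  · intro h0
    obtain ⟨ε, hε⟩ : ∃ ε, ε = ρ / (2 * μ) := ⟨_, rfl⟩
    have e0 : 0 < ε := by rw [hε]; positivity
    have h1 := usmall (EuclideanSpace.single 0 ε) (by
      rw [EuclideanSpace.norm_single, Real.norm_of_nonneg e0.le, hε]
      have : μ * (ρ / (2 * μ)) = ρ / 2 := by field_simp
      rw [this]; linarith)
    have hx : (EuclideanSpace.single 0 ε : EuclideanSpace ℝ (Fin 2)) ≠ 0 := by
      rw [← norm_pos_iff, EuclideanSpace.norm_single, Real.norm_of_nonneg e0.le]
      exact e0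
    rw [h0] at h1
    have h2 : K * (starRingEnd ℂ) (ZL μ (EuclideanSpace.single 0 ε)) ^ n ≠ 0 := by
      refine mul_ne_zero hK (pow_ne_zero _ ?_)
      rw [Ne, map_eq_zero]
      exact Znz _ hx
    exact h2 h1.symm
  · intro x
    by_cases h : u x = 0
    · have := est x
      rw [h, norm_zero, mul_zero, mul_zero, add_zero] at this
      have h2 : ‖lap u x‖ ≤ 0 := by
        by_contra hh
        push Not at hh
        have := mul_pos hh (Xpos x)
        linarith
      have h3 := norm_le_zero_iff.1 h2
      rw [h, h3]; simp
    · simp only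
      rw [div_mul_cancel₀ _ h]
  · intro x
    have e : √(1 + ‖x‖ ^ 2) ^ (-(1 / 2 : ℝ)) = (√(√(1 + ‖x‖ ^ 2)))⁻¹ := by
      rw [rpow_neg (sqrt_nonneg _), sqrt_eq_rpow √(1 + ‖x‖ ^ 2)]
    rw [e, ← div_eq_mul_inv, le_div_iff₀ (Xpos x)]
    simp only
    by_cases h : u x = 0
    · rw [h, div_zero, norm_zero, zero_mul]; positivity
    · have hp : 0 < ‖u x‖ := norm_pos_iff.2 h
      rw [norm_div, div_mul_eq_mul_div, div_le_iff₀ hp]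
      refine (est x).trans ?_
      gcongr
      linarith
  · intro x
    by_cases h : x = 0
    · rw [h, u0, norm_zero]; positivity
    · rw [unz x h]
      refine (hM _).trans ?_
      rw [logre x h, ← mul_assoc]
      gcongr
      linarith


end Helpers

theorem stmt2 (lam : ℝ) (hlam : 0 < lam) :
    ∃ (C c : ℝ) (V u : EuclideanSpace ℝ (Fin 2) → ℂ),
      0 < C ∧ 0 < c ∧ u ≠ 0 ∧ ContDiff ℝ 2 u ∧
      (∀ x, lap u x + (lam : ℂ) * u x = V x * u x) ∧
      (∀ x, ‖V x‖ ≤ C * Real.sqrt (1 + ‖x‖ ^ 2) ^ (-(1 / 2 : ℝ))) ∧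
      (∀ x, ‖u x‖ ≤ C * Real.exp (-(c * ‖x‖))) := by
  exact stmt2_aux lam hlam
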